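/- arXiv:2202.08727 — 9 statements merged into one kernel-verified Lean document; each statement's English description precedes it below -/
import Mathlib

section
/- Let N ≥ 2 be an integer and let ψ be a model function which is nondecreasing on [0,∞). Then the associated function H satisfies (H'(r))² ≤ 2 H(r) for every r ≥ 0. -/
open Real MeasureTheory Set Filter

/-- The function `H` associated with a model function `ψ` on an `N`-dimensional model
manifold: `H r = ∫₀^r (∫₀^s ψ(t)^{N-1} dt) / ψ(s)^{N-1} ds`. -/
noncomputable def Hfun (N : ℕ) (ψ : ℝ → ℝ) (r : ℝ) : ℝ :=
  ∫ s in (0:ℝ)..r, (∫ t in (0:ℝ)..s, ψ t ^ (N - 1)) / ψ s ^ (N - 1)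

/-- If `N ≥ 2` and `ψ` is a model function which is nondecreasing on `[0,∞)`, then the
associated function `H` satisfies `(H'(r))² ≤ 2 H(r)` for every `r ≥ 0`. -/
theorem statement0 (N : ℕ) (hN : 2 ≤ N) (ψ : ℝ → ℝ)
    (hsmooth : ContDiffOn ℝ (⊤ : ℕ∞) ψ (Ici 0))
    (hψ0 : ψ 0 = 0) (hψ'0 : deriv ψ 0 = 1)
    (hψpos : ∀ r > (0:ℝ), 0 < ψ r)
    (hmono : MonotoneOn ψ (Ici 0)) :
    ∀ r ≥ (0:ℝ), (deriv (Hfun N ψ) r) ^ 2 ≤ 2 * Hfun N ψ r := by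
  set p : ℝ → ℝ := fun t => ψ t ^ (N - 1) with hp
  have hψnn : ∀ t, 0 ≤ t → 0 ≤ ψ t := by
    intro t ht
    rcases ht.eq_or_lt with h | h
    · rw [← h, hψ0]
    · exact (hψpos t h).le
  have hpc : ContinuousOn p (Ici 0) := hsmooth.continuousOn.pow _
  have hpm : ∀ s t, 0 ≤ s → s ≤ t → p s ≤ p t := by
    intro s t hs hst
    exact pow_le_pow_left₀ (hψnn s hs) (hmono hs (hs.trans hst) hst) _
  have hppos : ∀ t, 0 < t → 0 < p t := fun t ht => pow_pos (hψpos t ht) _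
  have hpnn : ∀ t, 0 ≤ t → 0 ≤ p t := fun t ht => pow_nonneg (hψnn t ht) _
  have hpint : ∀ a b, 0 ≤ a → 0 ≤ b → IntervalIntegrable p volume a b := by
    intro a b ha hb
    apply ContinuousOn.intervalIntegrable
    apply hpc.mono
    intro x hx
    exact (le_min ha hb).trans hx.1
  set V : ℝ → ℝ := fun s => ∫ t in (0:ℝ)..s, p t with hV
  set W : ℝ → ℝ := fun s => V s / p s with hW
  have hH : Hfun N ψ = fun r => ∫ s in (0:ℝ)..r, W s := rfl
  have hdiff : ∀ s r, 0 ≤ s → s ≤ r → V r - V s ≤ (r - s) * p r := by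
    intro s r hs hsr
    have h1 : V r - V s = ∫ t in s..r, p t :=
      intervalIntegral.integral_interval_sub_left (hpint 0 r le_rfl (hs.trans hsr)) (hpint 0 s le_rfl hs)
    rw [h1]
    have h2 : ∫ t in s..r, p t ≤ ∫ t in s..r, p r := by
      apply intervalIntegral.integral_mono_on hsr (hpint s r hs (hs.trans hsr)) (by simp)
      intro x hx
      exact hpm x r (hs.trans hx.1) hx.2
    simpa using h2
  have hV0 : V 0 = 0 := by simp [hV]
  have hVnn : ∀ s, 0 ≤ s → 0 ≤ V s := fun s hs =>
    intervalIntegral.integral_nonneg hs (fun t ht => hpnn t ht.1)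
  have hWnn : ∀ s, 0 ≤ s → 0 ≤ W s := fun s hs => div_nonneg (hVnn s hs) (hpnn s hs)
  have hW0 : W 0 = 0 := by simp [hW, hV0]
  have hWle : ∀ s, 0 ≤ s → W s ≤ s := by
    intro s hs
    rcases hs.eq_or_lt with h | h
    · rw [← h, hW0]
    · have := hdiff 0 s le_rfl hs
      rw [hV0] at this
      exact (div_le_iff₀ (hppos s h)).2 (by linarith)
  have hVder : ∀ s, 0 < s → HasDerivAt V (p s) s := by
    intro s hs
    apply intervalIntegral.integral_hasDerivAt_right (hpint 0 s le_rfl hs.le)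
    · exact (hpc.mono Ioi_subset_Ici_self).stronglyMeasurableAtFilter isOpen_Ioi s hs
    · exact hpc.continuousAt (Ici_mem_nhds hs)
  have hWcpos : ∀ s, 0 < s → ContinuousAt W s := fun s hs =>
    (hVder s hs).continuousAt.div (hpc.continuousAt (Ici_mem_nhds hs)) (hppos s hs).ne'
  have hWc : ContinuousOn W (Ici 0) := by
    intro s hs
    rcases (mem_Ici.1 hs).eq_or_lt with h | h
    · rw [← h]
      unfold ContinuousWithinAt
      rw [hW0]
      refine tendsto_of_tendsto_of_tendsto_of_le_of_le' (g := fun _ => (0:ℝ)) (h := fun s => s)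
        tendsto_const_nhds (tendsto_id.mono_left nhdsWithin_le_nhds) ?_ ?_
      · filter_upwards [self_mem_nhdsWithin] with x hx using hWnn x hx
      · filter_upwards [self_mem_nhdsWithin] with x hx using hWle x hx
    · exact (hWcpos s h).continuousWithinAt
  have hWint : ∀ a b, 0 ≤ a → 0 ≤ b → IntervalIntegrable W volume a b := by
    intro a b ha hb
    apply ContinuousOn.intervalIntegrable
    apply hWc.mono
    intro x hx
    exact (le_min ha hb).trans hx.1
  have hHder : ∀ r, 0 ≤ r → deriv (Hfun N ψ) r = W r := by
    intro r hr
    rw [hH]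
    rcases hr.eq_or_lt with h | h
    · subst h
      rw [hW0]
      by_cases hd : DifferentiableAt ℝ (fun r => ∫ s in (0:ℝ)..r, W s) 0
      · have h1 := hd.hasDerivAt.hasDerivWithinAt (s := Ici 0)
        have h2 : HasDerivWithinAt (fun r => ∫ s in (0:ℝ)..r, W s) (W 0) (Ici 0) 0 := by
          apply intervalIntegral.integral_hasDerivWithinAt_right (t := Ioi 0) (by simp)
          · exact ⟨Ioi 0, self_mem_nhdsWithin, (hWc.mono Ioi_subset_Ici_self).aestronglyMeasurable measurableSet_Ioi⟩
          · exact (hWc 0 self_mem_Ici).mono Ioi_subset_Ici_self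
        rw [hW0] at h2
        exact (uniqueDiffOn_Ici (0:ℝ) 0 self_mem_Ici).eq_deriv _ h1 h2
      · exact deriv_zero_of_not_differentiableAt hd
    · exact (intervalIntegral.integral_hasDerivAt_right (hWint 0 r le_rfl hr)
        ((hWc.mono Ioi_subset_Ici_self).stronglyMeasurableAtFilter isOpen_Ioi r h)
        (hWcpos r h)).deriv
  intro r hr
  rw [hHder r hr, hH]
  rcases hr.eq_or_lt with h | h
  · subst h
    simp [hW0]
  have hWr := hWle r hr
  have hWr0 := hWnn r hr
  set w := W r with hw
  have hlow : ∀ s ∈ Icc (r - w) r, w - (r - s) ≤ W s := by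
    intro s hs
    have hs0 : 0 ≤ s := by linarith [hs.1]
    rcases hs0.eq_or_lt with h0 | h0
    · rw [← h0, hW0]; linarith
    have h1 := hdiff s r hs0 hs.2
    have h2 : V r = w * p r := by
      rw [hw]; exact (div_mul_cancel₀ _ (hppos r h).ne').symm
    refine (le_div_iff₀ (hppos s h0)).2 ?_
    have h3 : (w - (r - s)) * p s ≤ (w - (r - s)) * p r :=
      mul_le_mul_of_nonneg_left (hpm s r hs0 hs.2) (by linarith [hs.1])
    nlinarith
  have hsplit := intervalIntegral.integral_add_adjacent_intervals
    (hWint 0 (r - w) le_rfl (by linarith)) (hWint (r - w) r (by linarith) hr)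
  have hA : 0 ≤ ∫ s in (0:ℝ)..(r - w), W s :=
    intervalIntegral.integral_nonneg (by linarith) (fun t ht => hWnn t ht.1)
  have hB : ∫ s in (r - w)..r, (w - (r - s)) ≤ ∫ s in (r - w)..r, W s :=
    intervalIntegral.integral_mono_on (by linarith)
      (Continuous.intervalIntegrable (by fun_prop) _ _) (hWint (r - w) r (by linarith) hr) hlow
  have hC : ∫ s in (r - w)..r, (w - (r - s)) = w ^ 2 / 2 := by
    have : ∀ s : ℝ, w - (r - s) = (w - r) + s := fun s => by ring
    simp_rw [this]
    rw [intervalIntegral.integral_add (by simp) (Continuous.intervalIntegrable (by fun_prop) _ _)]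
    simp
    ring
  show w ^ 2 ≤ 2 * ∫ s in (0:ℝ)..r, W s
  linarith
end

section
/- Let m > 1, let N ≥ 2 be an integer, and let ψ be a model function which is nondecreasing. Suppose U: [0,∞) → ℝ is a nondecreasing C¹ function with U(0) = 1 and U(r) ≥ 1 for all r, satisfying the integral equation U'(r) ψ(r)^{N-1} = ∫₀^r ψ(s)^{N-1} U(s)^{1/m} ds for all r > 0. Then U(r)^{(m-1)/m} ≤ 1 + ((m-1)/m) H(r) for every r ≥ 0; in particular U(r) ≤ (1 + H(r))^{m/(m-1)} for every r ≥ 0. -/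
open Real MeasureTheory Set Filter

theorem prim_aux (f : ℝ → ℝ) (hf : ContinuousOn f (Ici 0)) :
    ContinuousOn (fun r => ∫ s in (0:ℝ)..r, f s) (Ici 0) ∧
      ∀ r > (0:ℝ), HasDerivAt (fun r => ∫ s in (0:ℝ)..r, f s) (f r) r := by
  have hg : Continuous (fun s : ℝ => f (max 0 s)) :=
    hf.comp_continuous (by fun_prop) (fun x => mem_Ici.2 (le_max_left _ _))
  have heq : ∀ r ∈ Ici (0:ℝ), (∫ s in (0:ℝ)..r, f s) = ∫ s in (0:ℝ)..r, f (max 0 s) := by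
    intro r hr
    apply intervalIntegral.integral_congr
    intro s hs
    rw [uIcc_of_le hr] at hs
    simp only [max_eq_right hs.1]
  have hd : ∀ r : ℝ, HasDerivAt (fun r => ∫ s in (0:ℝ)..r, f (max 0 s)) (f (max 0 r)) r :=
    fun r => hg.integral_hasStrictDerivAt 0 r |>.hasDerivAt
  refine ⟨?_, ?_⟩
  · have hc : Continuous (fun r => ∫ s in (0:ℝ)..r, f (max 0 s)) :=
      continuous_iff_continuousAt.2 fun r => (hd r).continuousAt
    exact hc.continuousOn.congr heq
  · intro r hr
    have h1 := hd r
    rw [max_eq_right hr.le] at h1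
    refine h1.congr_of_eventuallyEq ?_
    filter_upwards [Ioi_mem_nhds hr] with x hx
    exact heq x (mem_Ici.2 (le_of_lt (mem_Ioi.1 hx)))

/-- Upper bound for solutions of the radial ODE `(ψ^{N-1} U')' = ψ^{N-1} U^{1/m}`:
if `U` is nondecreasing, `C¹`, `U(0)=1`, `U ≥ 1`, and
`U'(r) ψ(r)^{N-1} = ∫₀^r ψ(s)^{N-1} U(s)^{1/m} ds` for `r > 0`, then
`U(r)^{(m-1)/m} ≤ 1 + ((m-1)/m) H(r)` and hence `U(r) ≤ (1+H(r))^{m/(m-1)}`. -/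
theorem statement2 (m : ℝ) (hm : 1 < m) (N : ℕ) (hN : 2 ≤ N) (ψ : ℝ → ℝ)
    (hsmooth : ContDiffOn ℝ (⊤ : ℕ∞) ψ (Ici 0))
    (hψ0 : ψ 0 = 0) (hψ'0 : deriv ψ 0 = 1)
    (hψpos : ∀ r > (0:ℝ), 0 < ψ r)
    (hmono : MonotoneOn ψ (Ici 0))
    (U : ℝ → ℝ) (hUC1 : ContDiffOn ℝ 1 U (Ici 0))
    (hUmono : MonotoneOn U (Ici 0))
    (hU0 : U 0 = 1) (hU1 : ∀ r ≥ (0:ℝ), 1 ≤ U r)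
    (hUeq : ∀ r > (0:ℝ), deriv U r * ψ r ^ (N - 1)
        = ∫ s in (0:ℝ)..r, ψ s ^ (N - 1) * U s ^ (1/m)) :
    ∀ r ≥ (0:ℝ), U r ^ ((m-1)/m) ≤ 1 + (m-1)/m * Hfun N ψ r ∧
      U r ≤ (1 + Hfun N ψ r) ^ (m/(m-1)) := by
  have hm0 : 0 < m := by linarith
  have hα : 0 < (m-1)/m := div_pos (by linarith) hm0
  have hα1 : (m-1)/m ≤ 1 := by rw [div_le_one hm0]; linarith
  have hψc : ContinuousOn (fun s => ψ s ^ (N-1)) (Ici 0) := hsmooth.continuousOn.pow _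
  have hUc : ContinuousOn U (Ici 0) := hUC1.continuousOn
  have hψnn : ∀ r ∈ Ici (0:ℝ), 0 ≤ ψ r := by
    intro r hr
    have := hmono (mem_Ici.2 le_rfl) hr hr
    rwa [hψ0] at this
  have hΨpos : ∀ r > (0:ℝ), 0 < ψ r ^ (N-1) := fun r hr => pow_pos (hψpos r hr) _
  have hint : ∀ f : ℝ → ℝ, ContinuousOn f (Ici 0) → ∀ r ≥ (0:ℝ),
      IntervalIntegrable f volume 0 r := by
    intro f hf r hr
    apply ContinuousOn.intervalIntegrable
    rw [uIcc_of_le hr]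
    exact hf.mono Icc_subset_Ici_self
  obtain ⟨hIc, -⟩ := prim_aux _ hψc
  have hInn : ∀ r ≥ (0:ℝ), 0 ≤ ∫ t in (0:ℝ)..r, ψ t ^ (N-1) := by
    intro r hr
    apply intervalIntegral.integral_nonneg hr
    intro t ht
    exact pow_nonneg (hψnn t ht.1) _
  have hIle : ∀ r ≥ (0:ℝ), (∫ t in (0:ℝ)..r, ψ t ^ (N-1)) ≤ r * ψ r ^ (N-1) := by
    intro r hr
    have h1 : (∫ t in (0:ℝ)..r, ψ t ^ (N-1)) ≤ ∫ t in (0:ℝ)..r, ψ r ^ (N-1) := by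
      apply intervalIntegral.integral_mono_on hr (hint _ hψc r hr) (by simp)
      intro t ht
      exact pow_le_pow_left₀ (hψnn t ht.1) (hmono ht.1 hr ht.2) _
    simpa using h1
  set h : ℝ → ℝ := fun s => (∫ t in (0:ℝ)..s, ψ t ^ (N - 1)) / ψ s ^ (N - 1) with hh
  have hnn : ∀ s ≥ (0:ℝ), 0 ≤ h s := fun s hs => div_nonneg (hInn s hs) (pow_nonneg (hψnn s hs) _)
  have h0 : h 0 = 0 := by simp [hh]
  have hle : ∀ s ≥ (0:ℝ), h s ≤ s := by
    intro s hs
    rcases eq_or_lt_of_le hs with rfl | hs'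
    · rw [h0]
    · exact (div_le_iff₀ (hΨpos s hs')).2 (hIle s hs)
  have hc : ContinuousOn h (Ici 0) := by
    intro s hs
    rcases eq_or_lt_of_le (mem_Ici.1 hs) with rfl | hs'
    · unfold ContinuousWithinAt
      rw [h0]
      refine tendsto_of_tendsto_of_tendsto_of_le_of_le' (g := fun _ => (0:ℝ)) (h := fun x => x)
        tendsto_const_nhds (tendsto_id.mono_left nhdsWithin_le_nhds) ?_ ?_
      · filter_upwards [self_mem_nhdsWithin] with x hx using hnn x hx
      · filter_upwards [self_mem_nhdsWithin] with x hx using hle x hx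
    · exact (hIc s hs).div (hψc s hs) (hΨpos s hs').ne'
  obtain ⟨hHc, hHd⟩ := prim_aux h hc
  have hHeq : Hfun N ψ = fun r => ∫ s in (0:ℝ)..r, h s := rfl
  rw [← hHeq] at hHc hHd
  have hHnn : ∀ r ≥ (0:ℝ), 0 ≤ Hfun N ψ r := by
    intro r hr
    rw [hHeq]
    exact intervalIntegral.integral_nonneg hr fun t ht => hnn t ht.1
  have hUd : ∀ r > (0:ℝ), HasDerivAt U (deriv U r) r := by
    intro r hr
    exact ((hUC1.differentiableOn (by simp)).differentiableAt (Ici_mem_nhds hr)).hasDerivAt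
  have hUpos : ∀ r ≥ (0:ℝ), 0 < U r := fun r hr => by linarith [hU1 r hr]
  have hU'le : ∀ r > (0:ℝ), deriv U r ≤ U r ^ (1/m) * h r := by
    intro r hr
    have e : U r ^ (1/m) * h r = (U r ^ (1/m) * ∫ t in (0:ℝ)..r, ψ t ^ (N-1)) / ψ r ^ (N-1) := by
      rw [hh]; ring
    rw [e, le_div_iff₀ (hΨpos r hr), hUeq r hr, ← intervalIntegral.integral_const_mul]
    apply intervalIntegral.integral_mono_on hr.le
    · apply hint _ _ r hr.le
      exact hψc.mul (hUc.rpow_const fun x hx => Or.inl (hUpos x hx).ne')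
    · exact (hint _ hψc r hr.le).const_mul _
    · intro t ht
      rw [mul_comm]
      apply mul_le_mul_of_nonneg_right _ (pow_nonneg (hψnn t ht.1) _)
      exact Real.rpow_le_rpow (hUpos t ht.1).le (hUmono ht.1 hr.le ht.2) (by positivity)
  have hmonoD : MonotoneOn (fun r => (m-1)/m * Hfun N ψ r - U r ^ ((m-1)/m)) (Ici 0) := by
    have hder : ∀ r > (0:ℝ), HasDerivAt (fun r => (m-1)/m * Hfun N ψ r - U r ^ ((m-1)/m))
        ((m-1)/m * h r - deriv U r * ((m-1)/m) * U r ^ ((m-1)/m - 1)) r := by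
      intro r hr
      exact ((hHd r hr).const_mul _).sub ((hUd r hr).rpow_const (Or.inl (hUpos r hr.le).ne'))
    apply monotoneOn_of_deriv_nonneg (convex_Ici 0)
    · exact (hHc.const_smul ((m-1)/m)).sub
        (hUc.rpow_const fun x hx => Or.inl (hUpos x hx).ne')
    · rw [interior_Ici]
      exact fun r hr => (hder r hr).differentiableAt.differentiableWithinAt
    · rw [interior_Ici]
      intro r hr
      rw [(hder r hr).deriv]
      have hr' : (0:ℝ) < r := hr
      have hp : 0 < U r ^ ((m-1)/m - 1) := Real.rpow_pos_of_pos (hUpos r hr'.le) _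
      have hone : U r ^ (1/m) * U r ^ ((m-1)/m - 1) = 1 := by
        rw [← Real.rpow_add (hUpos r hr'.le)]
        have : 1/m + ((m-1)/m - 1) = 0 := by field_simp; ring
        rw [this, Real.rpow_zero]
      have h1 := mul_le_mul_of_nonneg_right (hU'le r hr') hp.le
      have h2 : U r ^ (1/m) * h r * U r ^ ((m-1)/m - 1) = h r := by
        rw [mul_right_comm, hone, one_mul]
      rw [h2] at h1
      nlinarith [mul_le_mul_of_nonneg_left h1 hα.le]
  intro r hr
  have hfirst : U r ^ ((m-1)/m) ≤ 1 + (m-1)/m * Hfun N ψ r := by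
    have := hmonoD (mem_Ici.2 le_rfl) (mem_Ici.2 hr) hr
    have hH0 : Hfun N ψ 0 = 0 := by simp [Hfun]
    simp only [hH0, hU0, Real.one_rpow] at this
    linarith
  refine ⟨hfirst, ?_⟩
  have hm1 : m - 1 ≠ 0 := by linarith
  have hsec : U r ^ ((m-1)/m) ≤ 1 + Hfun N ψ r := by
    nlinarith [hHnn r hr]
  have hUr : U r = (U r ^ ((m-1)/m)) ^ (m/(m-1)) := by
    rw [← Real.rpow_mul (hUpos r hr).le]
    have : (m-1)/m * (m/(m-1)) = 1 := by field_simp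
    rw [this, Real.rpow_one]
  rw [hUr]
  exact Real.rpow_le_rpow (Real.rpow_nonneg (hUpos r hr).le _) hsec
    (div_nonneg hm0.le (by linarith))
end

section
/- Let m > 1, let N ≥ 2 be an integer, and let ψ be a model function whose associated function H satisfies (H'(r))² ≤ 2 H(r) for all r ≥ 0. Then, for every p with 0 < p ≤ m/(m-1) and every r > 0, ∫₀^r ψ(s)^{N-1} H(s)^{p/m} ds ≥ (m/(m+2p)) H(r)^{p/m} ∫₀^r ψ(s)^{N-1} ds; in particular the left-hand side is at least ((m-1)/(m+1)) H(r)^{p/m} ∫₀^r ψ(s)^{N-1} ds. -/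
open Real MeasureTheory Set Filter

lemma aux_ftc (f : ℝ → ℝ) (hf : ContinuousOn f (Ici 0)) :
    (∀ s > (0:ℝ), HasDerivAt (fun x => ∫ t in (0:ℝ)..x, f t) (f s) s) ∧
    ContinuousOn (fun x => ∫ t in (0:ℝ)..x, f t) (Ici 0) := by
  have hg : Continuous (fun x => f (max x 0)) :=
    hf.comp_continuous (by fun_prop) (fun x => mem_Ici.2 (le_max_right _ _))
  have heq : ∀ x ≥ (0:ℝ), ∫ t in (0:ℝ)..x, f t = ∫ t in (0:ℝ)..x, f (max t 0) := by
    intro x hx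
    apply intervalIntegral.integral_congr
    intro t ht
    rw [uIcc_of_le hx] at ht
    simp [max_eq_left ht.1]
  have hd : ∀ s, HasDerivAt (fun x => ∫ t in (0:ℝ)..x, f (max t 0)) (f (max s 0)) s := fun s =>
    (hg.integral_hasStrictDerivAt 0 s).hasDerivAt
  refine ⟨fun s hs => ?_, ?_⟩
  · have h := hd s
    rw [max_eq_left hs.le] at h
    refine h.congr_of_eventuallyEq ?_
    filter_upwards [lt_mem_nhds hs] with x hx using heq x (le_of_lt hx)
  · have hc : Continuous (fun x => ∫ t in (0:ℝ)..x, f (max t 0)) :=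
      continuous_iff_continuousAt.2 fun s => (hd s).continuousAt
    exact hc.continuousOn.congr fun x hx => heq x hx

lemma aux_cont (n : ℕ) (ψ : ℝ → ℝ) (hc : ContinuousOn ψ (Ici 0))
    (hψ0 : ψ 0 = 0) (hψ'0 : deriv ψ 0 = 1) (hψpos : ∀ r > (0:ℝ), 0 < ψ r) :
    ContinuousOn (fun s => (∫ t in (0:ℝ)..s, ψ t ^ n) / ψ s ^ n) (Ici 0) := by
  have hA := (aux_ftc _ (hc.pow n)).2
  have hI : ∀ s ≥ (0:ℝ), IntervalIntegrable (fun t => ψ t ^ n) volume 0 s := fun s hs =>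
    ((hc.pow n).mono (by rw [uIcc_of_le hs]; exact Icc_subset_Ici_self)).intervalIntegrable
  intro s hs
  rcases eq_or_lt_of_le (show (0:ℝ) ≤ s from hs) with h0 | h0
  · subst h0
    have hd : HasDerivAt ψ 1 0 := by
      rw [← hψ'0]
      apply DifferentiableAt.hasDerivAt
      apply differentiableAt_of_deriv_ne_zero
      rw [hψ'0]; norm_num
    have hb : ∀ᶠ x in nhds (0:ℝ), |ψ x - x| ≤ 1/2 * |x| := by
      have := (hasDerivAt_iff_isLittleO.1 hd).def (show (0:ℝ) < 1/2 by norm_num)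
      simpa [hψ0] using this
    obtain ⟨δ, hδ, hb⟩ := Metric.eventually_nhds_iff.1 hb
    have hb' : ∀ x, 0 ≤ x → x < δ → x / 2 ≤ ψ x ∧ ψ x ≤ 2 * x := by
      intro x hx hxd
      have := hb (y := x) (by rw [Real.dist_eq, sub_zero, abs_of_nonneg hx]; exact hxd)
      rw [abs_of_nonneg hx, abs_le] at this
      constructor <;> linarith [this.1, this.2]
    have key : ∀ x, 0 ≤ x → x < δ →
        0 ≤ (∫ t in (0:ℝ)..x, ψ t ^ n) / ψ x ^ n ∧
        (∫ t in (0:ℝ)..x, ψ t ^ n) / ψ x ^ n ≤ 4 ^ n * x := by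
      intro x hx hxd
      have hnn : ∀ t, 0 ≤ t → t < δ → 0 ≤ ψ t := fun t h1 h2 => by
        linarith [(hb' t h1 h2).1]
      have hA0 : 0 ≤ ∫ t in (0:ℝ)..x, ψ t ^ n :=
        intervalIntegral.integral_nonneg hx fun t ht =>
          pow_nonneg (hnn t ht.1 (ht.2.trans_lt hxd)) n
      have hψx := hnn x hx hxd
      refine ⟨div_nonneg hA0 (pow_nonneg hψx n), ?_⟩
      rcases eq_or_lt_of_le hx with h | h
      · subst h; simp
      rw [div_le_iff₀ (pow_pos (hψpos x h) n)]
      have h1 : ∫ t in (0:ℝ)..x, ψ t ^ n ≤ ∫ t in (0:ℝ)..x, (2 * x) ^ n := by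
        apply intervalIntegral.integral_mono_on hx (hI x hx) (by simp)
        intro t ht
        have := (hb' t ht.1 (ht.2.trans_lt hxd)).2
        exact pow_le_pow_left₀ (hnn t ht.1 (ht.2.trans_lt hxd)) (by linarith [ht.2]) n
      rw [intervalIntegral.integral_const, sub_zero, smul_eq_mul] at h1
      have h2 : (x / 2) ^ n ≤ ψ x ^ n := pow_le_pow_left₀ (by linarith) (hb' x hx hxd).1 n
      have h3 : (2 * x) ^ n = 4 ^ n * (x / 2) ^ n := by rw [← mul_pow]; congr 1; ring
      calc _ ≤ x * (2 * x) ^ n := h1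
        _ = 4 ^ n * x * (x / 2) ^ n := by rw [h3]; ring
        _ ≤ _ := by gcongr
    have hev : ∀ᶠ x in nhdsWithin (0:ℝ) (Ici 0), 0 ≤ x ∧ x < δ := by
      filter_upwards [self_mem_nhdsWithin, mem_nhdsWithin_of_mem_nhds (gt_mem_nhds hδ)] with x h1 h2
      exact ⟨h1, h2⟩
    unfold ContinuousWithinAt
    simp only [intervalIntegral.integral_same, zero_div]
    refine squeeze_zero' (g := fun x => 4 ^ n * x)
      (hev.mono fun x h => (key x h.1 h.2).1) (hev.mono fun x h => (key x h.1 h.2).2) ?_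
    have : Continuous (fun x : ℝ => (4:ℝ) ^ n * x) := by fun_prop
    have h := this.continuousWithinAt (s := Ici 0) (x := 0)
    simpa [ContinuousWithinAt] using h
  · exact (hA s hs).div ((hc.pow n) s hs) (pow_pos (hψpos s h0) n).ne'

/-- Integration-by-parts estimate: if `(H')² ≤ 2H`, then for `0 < p ≤ m/(m-1)` and `r > 0`,
`∫₀^r ψ^{N-1} H^{p/m} ds ≥ (m/(m+2p)) H(r)^{p/m} ∫₀^r ψ^{N-1} ds`, and in particular the
left-hand side is at least `((m-1)/(m+1)) H(r)^{p/m} ∫₀^r ψ^{N-1} ds`. -/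
theorem statement3 (m : ℝ) (hm : 1 < m) (N : ℕ) (hN : 2 ≤ N) (ψ : ℝ → ℝ)
    (hsmooth : ContDiffOn ℝ (⊤ : ℕ∞) ψ (Ici 0))
    (hψ0 : ψ 0 = 0) (hψ'0 : deriv ψ 0 = 1)
    (hψpos : ∀ r > (0:ℝ), 0 < ψ r)
    (hH2 : ∀ r ≥ (0:ℝ), (deriv (Hfun N ψ) r) ^ 2 ≤ 2 * Hfun N ψ r) :
    ∀ p : ℝ, 0 < p → p ≤ m/(m-1) → ∀ r > (0:ℝ),
      (m/(m+2*p)) * Hfun N ψ r ^ (p/m) * (∫ s in (0:ℝ)..r, ψ s ^ (N - 1))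
        ≤ (∫ s in (0:ℝ)..r, ψ s ^ (N - 1) * Hfun N ψ s ^ (p/m)) ∧
      ((m-1)/(m+1)) * Hfun N ψ r ^ (p/m) * (∫ s in (0:ℝ)..r, ψ s ^ (N - 1))
        ≤ (∫ s in (0:ℝ)..r, ψ s ^ (N - 1) * Hfun N ψ s ^ (p/m)) := by
  intro p hp hpm r hr
  have hc := hsmooth.continuousOn
  set n := N - 1 with hn
  have hw : ContinuousOn (fun s => ψ s ^ n) (Ici 0) := hc.pow n
  have hwpos : ∀ s > (0:ℝ), 0 < ψ s ^ n := fun s hs => pow_pos (hψpos s hs) n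
  obtain ⟨hAd, hAc⟩ := aux_ftc _ hw
  have hg := aux_cont n ψ hc hψ0 hψ'0 hψpos
  obtain ⟨hHd, hHc⟩ := aux_ftc _ hg
  change ∀ s > (0:ℝ), HasDerivAt (Hfun N ψ) _ s at hHd
  change ContinuousOn (Hfun N ψ) (Ici 0) at hHc
  have hApos : ∀ s > (0:ℝ), 0 < ∫ t in (0:ℝ)..s, ψ t ^ n := fun s hs =>
    intervalIntegral.intervalIntegral_pos_of_pos_on
      ((hw.mono (by rw [uIcc_of_le hs.le]; exact Icc_subset_Ici_self)).intervalIntegrable)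
      (fun x hx => hwpos x hx.1) hs
  have hHpos : ∀ s > (0:ℝ), 0 < Hfun N ψ s := fun s hs =>
    intervalIntegral.intervalIntegral_pos_of_pos_on
      ((hg.mono (by rw [uIcc_of_le hs.le]; exact Icc_subset_Ici_self)).intervalIntegrable)
      (fun x hx => div_pos (hApos x hx.1) (hwpos x hx.1)) hs
  have hm0 : 0 < m := by linarith
  have ha : 0 < p / m := div_pos hp hm0
  have hcoef : m / (m + 2 * p) = 1 / (1 + 2 * (p / m)) := by field_simp
  have hcle : (m - 1) / (m + 1) ≤ m / (m + 2 * p) := by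
    rw [le_div_iff₀ (by linarith)] at hpm
    rw [div_le_div_iff₀ (by linarith) (by linarith)]
    nlinarith
  set a := p / m with ha_def
  have hHa : ContinuousOn (fun s => Hfun N ψ s ^ a) (Ici 0) :=
    hHc.rpow_const fun x _ => Or.inr ha.le
  obtain ⟨hBd, hBc⟩ := aux_ftc _ (hw.mul hHa)
  have main : (m/(m+2*p)) * Hfun N ψ r ^ a * (∫ s in (0:ℝ)..r, ψ s ^ n)
        ≤ (∫ s in (0:ℝ)..r, ψ s ^ n * Hfun N ψ s ^ a) := by
    rw [hcoef]
    set c := 1 / (1 + 2 * a) with hc_def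
    have hcpos : 0 < c := by positivity
    have hc1 : c * (1 + 2 * a) = 1 := by rw [hc_def]; field_simp
    have hmono : MonotoneOn (fun x => (∫ s in (0:ℝ)..x, ψ s ^ n * Hfun N ψ s ^ a)
        - c * Hfun N ψ x ^ a * (∫ s in (0:ℝ)..x, ψ s ^ n)) (Ici 0) := by
      have hder : ∀ x > (0:ℝ), HasDerivAt (fun x => (∫ s in (0:ℝ)..x, ψ s ^ n * Hfun N ψ s ^ a)
        - c * Hfun N ψ x ^ a * (∫ s in (0:ℝ)..x, ψ s ^ n)) _ x := fun x hx =>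
        (hBd x hx).sub ((((hHd x hx).rpow_const (p := a) (Or.inl (hHpos x hx).ne')).const_mul c).mul
          (hAd x hx))
      apply monotoneOn_of_deriv_nonneg (convex_Ici 0)
      · exact hBc.sub ((hHa.const_mul c).mul hAc)
      · intro x hx
        rw [interior_Ici] at hx
        exact (hder x hx).differentiableAt.differentiableWithinAt
      · intro x hx
        rw [interior_Ici] at hx
        have hx' : 0 < x := hx
        rw [(hder x hx).deriv, Pi.mul_apply]
        beta_reduce
        have h2 := hH2 x hx'.le
        rw [(hHd x hx).deriv] at h2
        have hwx := hwpos x hx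
        have hHx := hHpos x hx
        set A := ∫ t in (0:ℝ)..x, ψ t ^ n with hA
        set w := ψ x ^ n with hw_def
        obtain ⟨q, hq⟩ : ∃ q, q = A / w := ⟨_, rfl⟩
        have hAq : A = q * w := by rw [hq]; field_simp
        rw [← hq] at h2 ⊢
        rw [hAq]
        set K := Hfun N ψ x with hK
        have hKa : K ^ a = K ^ (a - 1) * K := by
          rw [Real.rpow_sub_one hHx.ne']; field_simp
        rw [hKa]
        have hL : 0 < K ^ (a - 1) := Real.rpow_pos_of_pos hHx _
        have hfin : 0 ≤ c * a * w * K ^ (a - 1) * (2 * K - q ^ 2) :=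
          mul_nonneg (by positivity) (by linarith)
        have : (1:ℝ) - c = 2 * a * c := by linarith
        have e : w * (K ^ (a - 1) * K) = c * (1 + 2 * a) * (w * (K ^ (a - 1) * K)) := by
          rw [hc1, one_mul]
        nlinarith [hfin, e]
    have h := hmono (show (0:ℝ) ∈ Ici 0 by simp) (show r ∈ Ici 0 from hr.le) hr.le
    simp only [intervalIntegral.integral_same, mul_zero, sub_zero] at h
    linarith
  refine ⟨main, le_trans ?_ main⟩
  have := hApos r hr
  have := Real.rpow_pos_of_pos (hHpos r hr) a
  gcongr
end

section
/- Let N ≥ 2 be an integer, let ψ be a Cartan-Hadamard model function, and let H be the associated function. Assume there exist r₀ > 0 and K > 0 such that H'''(r) ≤ K H'(r)/H(r) for all r ≥ r₀. Then -H''(r) ≤ √2 + 2K·log((1+√2)/√2) for all r ≥ r₀; in particular there exists a constant K̂ > 0, depending only on K, such that -H''(r) ≤ K̂ for all r ≥ r₀. -/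
open Real MeasureTheory Set Filter

theorem mvt_aux {f f' : ℝ → ℝ} {a b C : ℝ} (hab : a ≤ b)
    (hc : ContinuousOn f (Icc a b))
    (hd : ∀ x ∈ Ioo a b, HasDerivAt f (f' x) x) (hb : ∀ x ∈ Ioo a b, f' x ≤ C) :
    f b - f a ≤ C * (b - a) := by
  refine (convex_Icc a b).image_sub_le_mul_sub_of_deriv_le hc ?_ ?_ a ⟨le_rfl, hab⟩ b
    ⟨hab, le_rfl⟩ hab
  · rw [interior_Icc]
    exact fun x hx => (hd x hx).differentiableAt.differentiableWithinAt
  · rw [interior_Icc]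
    intro x hx
    rw [(hd x hx).deriv]
    exact hb x hx

theorem core_aux {H h h1 h2 : ℝ → ℝ} {K r : ℝ} (hK : 0 < K) (hr : 0 < r)
    (hH : ∀ x > 0, 0 < H x) (hh : ∀ x > 0, 0 < h x)
    (hsq : ∀ x > 0, h x ^ 2 ≤ 2 * H x)
    (d0 : ∀ x > 0, HasDerivAt H (h x) x)
    (d1 : ∀ x > 0, HasDerivAt h (h1 x) x)
    (d2 : ∀ x > 0, HasDerivAt h1 (h2 x) x)
    (h3 : ∀ x ≥ r, h2 x ≤ K * h x / H x) :
    -(h1 r) ≤ √2 + 2 * K * Real.log ((1 + √2) / √2) := by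
  have hs2 : 0 < √2 := by positivity
  have hs22 : √2 * √2 = 2 := Real.mul_self_sqrt (by norm_num)
  have hle : ∀ x > 0, h x ≤ √2 * √(H x) := by
    intro x hx
    rw [← Real.sqrt_mul (by norm_num)]
    exact Real.le_sqrt_of_sq_le (hsq x hx)
  set q := √(H r) with hq
  have hqpos : 0 < q := Real.sqrt_pos.2 (hH r hr)
  have key1 : ∀ s ≥ r, √(H s) - q ≤ (1 / √2) * (s - r) := by
    intro s hs
    refine mvt_aux (f := fun x => √(H x)) (f' := fun x => h x / (2 * √(H x))) hs ?_ ?_ ?_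
    · intro x hx
      have hx0 : 0 < x := hr.trans_le hx.1
      exact ((d0 x hx0).sqrt (hH x hx0).ne').continuousAt.continuousWithinAt
    · intro x hx
      have hx0 : 0 < x := hr.trans hx.1
      exact (d0 x hx0).sqrt (hH x hx0).ne'
    · intro x hx
      have hx0 : 0 < x := hr.trans hx.1
      have hp := Real.sqrt_pos.2 (hH x hx0)
      rw [div_le_div_iff₀ (by positivity) hs2]
      nlinarith [hle x hx0]
  have key2 : ∀ s ≥ r, h1 s - h1 r ≤ K * (Real.log (H s) - Real.log (H r)) := by
    intro s hs
    have := mvt_aux (f := fun x => h1 x - K * Real.log (H x))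
      (f' := fun x => h2 x - K * (h x / H x)) (C := 0) hs ?_ ?_ ?_
    · linarith
    · intro x hx
      have hx0 : 0 < x := hr.trans_le hx.1
      exact ((d2 x hx0).sub (((d0 x hx0).log (hH x hx0).ne').const_mul K)).continuousAt.continuousWithinAt
    · intro x hx
      have hx0 : 0 < x := hr.trans hx.1
      exact (d2 x hx0).sub (((d0 x hx0).log (hH x hx0).ne').const_mul K)
    · intro x hx
      have := h3 x hx.1.le
      rw [mul_div_assoc] at this
      linarith
  set L := Real.log ((1 + √2) / √2) with hL
  have key3 : ∀ s ∈ Ioo r (r + q), h1 s ≤ h1 r + 2 * K * L := by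
    intro s hs
    have hs0 : 0 < s := hr.trans hs.1
    have h4 := key1 s hs.1.le
    have h5 : √(H s) ≤ q * ((1 + √2) / √2) := by
      have : (1 / √2) * (s - r) ≤ (1 / √2) * q :=
        mul_le_mul_of_nonneg_left (by linarith [hs.2]) (by positivity)
      have e : q * ((1 + √2) / √2) = q + (1 / √2) * q := by field_simp; ring
      linarith
    have h6 := Real.log_le_log (Real.sqrt_pos.2 (hH s hs0)) h5
    rw [Real.log_mul hqpos.ne' (by positivity), Real.log_sqrt (hH s hs0).le, hq,
      Real.log_sqrt (hH r hr).le] at h6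
    have h7 := key2 s hs.1.le
    have h8 : K * (Real.log (H s) - Real.log (H r)) ≤ K * (2 * L) :=
      mul_le_mul_of_nonneg_left (by linarith) hK.le
    linarith
  have key4 := mvt_aux (f := h) (f' := h1) (a := r) (b := r + q) (by linarith)
    (fun x hx => (d1 x (hr.trans_le hx.1)).continuousAt.continuousWithinAt)
    (fun x hx => d1 x (hr.trans hx.1)) key3
  have h9 := hle r hr
  have h10 := hh (r + q) (by linarith)
  by_contra hcon
  push Not at hcon
  have : (h1 r + 2 * K * L + √2) * q < 0 := mul_neg_of_neg_of_pos (by linarith) hqpos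
  nlinarith

theorem contDiffOn_of_deriv_aux {f g : ℝ → ℝ} (hd : ∀ x > 0, HasDerivAt f (g x) x)
    (hg : ContDiffOn ℝ (⊤ : ℕ∞) g (Ioi 0)) : ContDiffOn ℝ (⊤ : ℕ∞) f (Ioi 0) := by
  rw [contDiffOn_infty_iff_deriv_of_isOpen isOpen_Ioi]
  exact ⟨fun x hx => (hd x hx).differentiableAt.differentiableWithinAt,
    hg.congr fun x hx => (hd x hx).deriv⟩

theorem ftc_aux {f : ℝ → ℝ} (hf : ContinuousOn f (Ici 0)) {x : ℝ} (hx : 0 < x) :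
    HasDerivAt (fun r => ∫ t in (0:ℝ)..r, f t) (f x) x := by
  refine intervalIntegral.integral_hasDerivAt_right ?_ ?_ ?_
  · apply ContinuousOn.intervalIntegrable
    rw [uIcc_of_le hx.le]
    exact hf.mono Icc_subset_Ici_self
  · exact (hf.mono Ioi_subset_Ici_self).stronglyMeasurableAtFilter isOpen_Ioi x hx
  · exact hf.continuousAt (Ici_mem_nhds hx)

theorem main_aux (N : ℕ) (ψ : ℝ → ℝ)
    (hsmooth : ContDiffOn ℝ (⊤ : ℕ∞) ψ (Ici 0))
    (hψ0 : ψ 0 = 0)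
    (hψpos : ∀ r > (0:ℝ), 0 < ψ r)
    (hconv : ConvexOn ℝ (Ici 0) ψ) :
    ∃ h h1 h2 : ℝ → ℝ, 
    (∀ x > 0, 0 < Hfun N ψ x) ∧ (∀ x > 0, 0 < h x) ∧
    (∀ x > 0, h x ^ 2 ≤ 2 * Hfun N ψ x) ∧
    (∀ x > 0, HasDerivAt (Hfun N ψ) (h x) x) ∧
    (∀ x > 0, HasDerivAt h (h1 x) x) ∧
    (∀ x > 0, HasDerivAt h1 (h2 x) x) := by
  set n := N - 1 with hn
  have hmono : ∀ x > 0, ∀ y, x ≤ y → ψ x ≤ ψ y := by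
    intro x hx y hxy
    have hy : 0 < y := hx.trans_le hxy
    have h2 := hconv.2 (show (0:ℝ) ∈ Ici 0 by simp) (show y ∈ Ici 0 from hy.le)
      (show 0 ≤ 1 - x / y by rw [sub_nonneg, div_le_one hy]; exact hxy)
      (show 0 ≤ x / y by positivity) (by ring)
    simp only [smul_eq_mul, mul_zero, zero_add, hψ0, div_mul_cancel₀ _ hy.ne'] at h2
    have : x / y * ψ y ≤ 1 * ψ y :=
      mul_le_mul_of_nonneg_right ((div_le_one hy).2 hxy) (hψpos y hy).le
    linarith
  have hpc : ContinuousOn (fun t => ψ t ^ n) (Ici 0) := hsmooth.continuousOn.pow n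
  have hψs : ContDiffOn ℝ (⊤ : ℕ∞) ψ (Ioi 0) := hsmooth.mono Ioi_subset_Ici_self
  set F : ℝ → ℝ := fun s => ∫ t in (0:ℝ)..s, ψ t ^ n with hF
  have dF : ∀ x > 0, HasDerivAt F (ψ x ^ n) x := fun x hx => ftc_aux hpc hx
  have hFs : ContDiffOn ℝ (⊤ : ℕ∞) F (Ioi 0) := contDiffOn_of_deriv_aux dF (hψs.pow n)
  have hFi : ∀ x > 0, IntervalIntegrable (fun t => ψ t ^ n) volume 0 x := by
    intro x hx
    apply ContinuousOn.intervalIntegrable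
    rw [uIcc_of_le hx.le]
    exact hpc.mono Icc_subset_Ici_self
  have hFpos : ∀ x > 0, 0 < F x := fun x hx =>
    intervalIntegral.intervalIntegral_pos_of_pos_on (hFi x hx)
      (fun t ht => pow_pos (hψpos t ht.1) n) hx
  have hFle : ∀ x > 0, F x ≤ x * ψ x ^ n := by
    intro x hx
    have : F x ≤ ∫ t in (0:ℝ)..x, ψ x ^ n := by
      refine intervalIntegral.integral_mono_on_of_le_Ioo hx.le (hFi x hx) (by simp) ?_
      intro t ht
      exact pow_le_pow_left₀ (hψpos t ht.1).le (hmono t ht.1 x ht.2.le) n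
    simpa using this
  set g : ℝ → ℝ := fun s => F s / ψ s ^ n with hg
  have hgs : ContDiffOn ℝ (⊤ : ℕ∞) g (Ioi 0) :=
    hFs.div (hψs.pow n) fun x hx => (pow_pos (hψpos x hx) n).ne'
  have hgpos : ∀ x > 0, 0 < g x := fun x hx => div_pos (hFpos x hx) (pow_pos (hψpos x hx) n)
  have hgle : ∀ x > 0, g x ≤ x := fun x hx =>
    (div_le_iff₀ (pow_pos (hψpos x hx) n)).2 (hFle x hx)
  have hg0 : g 0 = 0 := by simp [hg, hF]
  have hgc : ContinuousOn g (Ici 0) := by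
    intro x hx
    rcases eq_or_lt_of_le (show (0:ℝ) ≤ x from hx) with h | h
    · subst h
      unfold ContinuousWithinAt
      rw [hg0]
      refine tendsto_of_tendsto_of_tendsto_of_le_of_le' (g := fun _ => (0:ℝ)) (h := fun x => x)
        tendsto_const_nhds (tendsto_id.mono_left nhdsWithin_le_nhds) ?_ ?_
      · filter_upwards [self_mem_nhdsWithin] with y hy
        rcases eq_or_lt_of_le (show (0:ℝ) ≤ y from hy) with h | h
        · rw [← h, hg0]
        · exact (hgpos y h).le
      · filter_upwards [self_mem_nhdsWithin] with y hy
        rcases eq_or_lt_of_le (show (0:ℝ) ≤ y from hy) with h | h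
        · rw [← h, hg0]
        · exact hgle y h
    · exact (hgs.continuousOn.continuousAt (Ioi_mem_nhds h)).continuousWithinAt
  have hHeq : Hfun N ψ = fun r => ∫ s in (0:ℝ)..r, g s := rfl
  have dH : ∀ x > 0, HasDerivAt (Hfun N ψ) (g x) x := fun x hx => by
    rw [hHeq]; exact ftc_aux hgc hx
  have hgi : ∀ x > 0, IntervalIntegrable g volume 0 x := by
    intro x hx
    apply ContinuousOn.intervalIntegrable
    rw [uIcc_of_le hx.le]
    exact hgc.mono Icc_subset_Ici_self
  have hHc : ∀ x > 0, ContinuousOn (Hfun N ψ) (Icc 0 x) := by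
    intro x hx
    rw [hHeq, ← uIcc_of_le hx.le]
    apply intervalIntegral.continuousOn_primitive_interval
    rw [uIcc_of_le hx.le]
    exact (hgc.mono Icc_subset_Ici_self).integrableOn_Icc
  have hg1 : ContDiffOn ℝ (⊤ : ℕ∞) (deriv g) (Ioi 0) :=
    ((contDiffOn_infty_iff_deriv_of_isOpen isOpen_Ioi).1 hgs).2
  have dg : ∀ x > 0, HasDerivAt g (deriv g x) x := fun x hx =>
    ((hgs.differentiableOn (by simp)).differentiableAt (Ioi_mem_nhds hx)).hasDerivAt
  have dg1 : ∀ x > 0, HasDerivAt (deriv g) (deriv (deriv g) x) x := fun x hx =>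
    ((hg1.differentiableOn (by simp)).differentiableAt (Ioi_mem_nhds hx)).hasDerivAt
  have hdg : ∀ x > 0, deriv g x ≤ 1 := by
    intro x hx
    have hp := pow_pos (hψpos x hx) n
    have dψ : HasDerivAt ψ (deriv ψ x) x :=
      ((hψs.differentiableOn (by simp)).differentiableAt (Ioi_mem_nhds hx)).hasDerivAt
    have hψ' : 0 ≤ deriv ψ x := by
      have hm : MonotoneOn ψ (Ioi 0) := fun a ha b _ hab => hmono a ha b hab
      rw [← derivWithin_of_isOpen isOpen_Ioi hx]
      exact hm.derivWithin_nonneg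
    have := ((dF x hx).div (dψ.pow n) hp.ne').deriv
    have e : deriv g x = _ := this
    rw [e, div_le_one (by positivity)]
    have h1 : 0 ≤ F x * (n * ψ x ^ (n - 1) * deriv ψ x) := by
      have := (hFpos x hx).le
      have := (hψpos x hx).le
      positivity
    simp only [Pi.pow_apply] at *
    nlinarith
  refine ⟨g, deriv g, deriv (deriv g), ?_, hgpos, ?_, dH, dg, dg1⟩
  · intro x hx
    exact intervalIntegral.intervalIntegral_pos_of_pos_on (hgi x hx) (fun t ht => hgpos t ht.1) hx
  · intro x hx
    have := mvt_aux (f := fun y => g y ^ 2 - 2 * Hfun N ψ y)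
      (f' := fun y => 2 * g y * deriv g y - 2 * g y) (C := 0) hx.le ?_ ?_ ?_
    · have h0 : Hfun N ψ 0 = 0 := by simp [Hfun]
      simp only [hg0, h0] at this
      linarith
    · exact ((hgc.mono Icc_subset_Ici_self).pow 2).sub ((hHc x hx).const_smul (2:ℝ))
    · intro y hy
      have := ((dg y hy.1).pow 2).sub ((dH y hy.1).const_mul 2)
      refine HasDerivAt.congr_deriv (f := fun y => g y ^ 2 - 2 * Hfun N ψ y) this ?_
      simp
    · intro y hy
      nlinarith [hgpos y hy.1, hdg y hy.1]

/-- If `ψ` is a Cartan-Hadamard model function and `H'''(r) ≤ K H'(r)/H(r)` for all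
`r ≥ r₀`, then `-H''(r) ≤ √2 + 2K log((1+√2)/√2)` for all `r ≥ r₀`; in particular there
is a constant `Khat > 0` (depending only on `K`) with `-H''(r) ≤ Khat` for all `r ≥ r₀`. -/
theorem statement5 (N : ℕ) (hN : 2 ≤ N) (ψ : ℝ → ℝ)
    (hsmooth : ContDiffOn ℝ (⊤ : ℕ∞) ψ (Ici 0))
    (hψ0 : ψ 0 = 0) (hψ'0 : deriv ψ 0 = 1)
    (hψpos : ∀ r > (0:ℝ), 0 < ψ r)
    (hconv : ConvexOn ℝ (Ici 0) ψ)
    (r₀ K : ℝ) (hr₀ : 0 < r₀) (hK : 0 < K)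
    (hH3 : ∀ r ≥ r₀, deriv (deriv (deriv (Hfun N ψ))) r
        ≤ K * deriv (Hfun N ψ) r / Hfun N ψ r) :
    (∀ r ≥ r₀, -(deriv (deriv (Hfun N ψ)) r)
        ≤ Real.sqrt 2 + 2 * K * Real.log ((1 + Real.sqrt 2) / Real.sqrt 2)) ∧
    ∃ Khat : ℝ, 0 < Khat ∧ ∀ r ≥ r₀, -(deriv (deriv (Hfun N ψ)) r) ≤ Khat := by
  obtain ⟨h, h1, h2, hH, hh, hsq, d0, d1, d2⟩ := main_aux N ψ hsmooth hψ0 hψpos hconv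
  have e1 : ∀ x > 0, deriv (Hfun N ψ) x = h x := fun x hx => (d0 x hx).deriv
  have e2 : ∀ x > 0, deriv (deriv (Hfun N ψ)) x = h1 x := by
    intro x hx
    have : deriv (Hfun N ψ) =ᶠ[nhds x] h := by
      filter_upwards [Ioi_mem_nhds hx] with y hy using e1 y hy
    rw [this.deriv_eq, (d1 x hx).deriv]
  have e3 : ∀ x > 0, deriv (deriv (deriv (Hfun N ψ))) x = h2 x := by
    intro x hx
    have : deriv (deriv (Hfun N ψ)) =ᶠ[nhds x] h1 := by
      filter_upwards [Ioi_mem_nhds hx] with y hy using e2 y hy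
    rw [this.deriv_eq, (d2 x hx).deriv]
  have main : ∀ r ≥ r₀, -(deriv (deriv (Hfun N ψ)) r)
        ≤ Real.sqrt 2 + 2 * K * Real.log ((1 + Real.sqrt 2) / Real.sqrt 2) := by
    intro r hr
    have hr0 : 0 < r := hr₀.trans_le hr
    rw [e2 r hr0]
    refine core_aux hK hr0 hH hh hsq d0 d1 d2 ?_
    intro x hx
    have hx0 : 0 < x := hr0.trans_le hx
    have := hH3 x (hr.trans hx)
    rwa [e3 x hx0, e1 x hx0] at this
  refine ⟨main, _, ?_, main⟩
  have h1 : 0 < Real.sqrt 2 := by positivity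
  have h2 : 0 ≤ Real.log ((1 + Real.sqrt 2) / Real.sqrt 2) := by
    apply Real.log_nonneg
    rw [le_div_iff₀ h1]
    linarith
  positivity
end

section
/- Let N ≥ 2 be an integer and let ψ be a Cartan-Hadamard model function (so ψ'' ≥ 0 and ψ' ≥ 1). Then (N-1) ψ'(r) ∫₀^r ψ(s)^{N-1} ds ≥ ψ(r)^N / 2 for every r > 0; equivalently, (N-1)(ψ'(r)/ψ(r)) H'(r) ≥ 1/2 for every r > 0, where H is the associated function. Consequently H''(r) ≤ 1/2 for every r > 0. -/
open Real MeasureTheory Set Filter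

/-- For a Cartan-Hadamard model function `ψ` (convex, so `ψ'' ≥ 0`, `ψ' ≥ 1`):
`(N-1) ψ'(r) ∫₀^r ψ^{N-1} ≥ ψ(r)^N / 2`, equivalently `(N-1)(ψ'/ψ) H' ≥ 1/2`, and
consequently `H'' ≤ 1/2`, for every `r > 0`. -/
theorem statement8 (N : ℕ) (hN : 2 ≤ N) (ψ : ℝ → ℝ)
    (hsmooth : ContDiffOn ℝ (⊤ : ℕ∞) ψ (Ici 0))
    (hψ0 : ψ 0 = 0) (hψ'0 : deriv ψ 0 = 1)
    (hψpos : ∀ r > (0:ℝ), 0 < ψ r)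
    (hconv : ConvexOn ℝ (Ici 0) ψ) :
    ∀ r > (0:ℝ),
      ψ r ^ N / 2 ≤ ((N:ℝ) - 1) * deriv ψ r * (∫ s in (0:ℝ)..r, ψ s ^ (N - 1)) ∧
      (1:ℝ)/2 ≤ ((N:ℝ) - 1) * (deriv ψ r / ψ r) * deriv (Hfun N ψ) r ∧
      deriv (deriv (Hfun N ψ)) r ≤ 1/2 := by
  obtain ⟨n, rfl⟩ : ∃ n, N = n + 2 := ⟨N - 2, by omega⟩
  have e1 : n + 2 - 1 = n + 1 := by omega
  simp only [Hfun, e1]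
  have hcont : ContinuousOn ψ (Ici 0) := hsmooth.continuousOn
  have hdiff : ∀ x > (0:ℝ), DifferentiableAt ℝ ψ x := fun x hx =>
    (hsmooth.contDiffAt (Ici_mem_nhds hx)).differentiableAt (by simp)
  have hcontp : ContinuousOn (fun x => ψ x ^ (n+1)) (Ici 0) := hcont.pow _
  have hdmono : ∀ x > (0:ℝ), ∀ y, x ≤ y → deriv ψ x ≤ deriv ψ y := by
    have h1 : ConvexOn ℝ (Ioi 0) ψ := hconv.subset Ioi_subset_Ici_self (convex_Ioi 0)
    have h2 := h1.monotoneOn_deriv (fun x hx => hdiff x hx)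
    exact fun x hx y hxy => h2 hx (lt_of_lt_of_le hx hxy) hxy
  have hnonneg : ∀ x, 0 ≤ x → 0 ≤ ψ x := fun x hx => by
    rcases hx.eq_or_lt with h | h
    · rw [← h, hψ0]
    · exact (hψpos x h).le
  have hψle : ∀ x y, 0 ≤ x → x ≤ y → ψ x ≤ ψ y := by
    intro x y hx hxy
    rcases (hx.trans hxy).eq_or_lt with h | h
    · have : x = y := by linarith
      rw [this]
    · have h3 := hconv.2 (show (0:ℝ) ∈ Ici 0 by simp) (show y ∈ Ici 0 from h.le)
        (show 0 ≤ 1 - x / y by rw [sub_nonneg, div_le_one h]; exact hxy)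
        (show 0 ≤ x / y by positivity) (by ring)
      simp only [smul_eq_mul, mul_zero, zero_add, hψ0] at h3
      rw [div_mul_cancel₀ _ h.ne'] at h3
      exact h3.trans (mul_le_of_le_one_left (hψpos y h).le (by rw [div_le_one h]; exact hxy))
  have hint : ∀ x, 0 ≤ x → IntervalIntegrable (fun x => ψ x ^ (n+1)) volume 0 x := by
    intro x hx
    apply ContinuousOn.intervalIntegrable
    rw [uIcc_of_le hx]
    exact hcontp.mono Icc_subset_Ici_self
  set F : ℝ → ℝ := fun x => ∫ s in (0:ℝ)..x, ψ s ^ (n+1) with hF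
  have hFd : ∀ x > (0:ℝ), HasDerivAt F (ψ x ^ (n+1)) x := by
    intro x hx
    exact intervalIntegral.integral_hasDerivAt_right (hint x hx.le)
      ((hcontp.mono Ioi_subset_Ici_self).stronglyMeasurableAtFilter isOpen_Ioi x hx)
      (hcontp.continuousAt (Ici_mem_nhds hx))
  have hF0 : ∀ x, 0 ≤ x → 0 ≤ F x := fun x hx =>
    intervalIntegral.integral_nonneg hx (fun u hu => pow_nonneg (hnonneg u hu.1) _)
  have hFle : ∀ x, 0 ≤ x → F x ≤ x * ψ x ^ (n+1) := by
    intro x hx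
    have := intervalIntegral.integral_mono_on hx (hint x hx)
      (intervalIntegrable_const (c := ψ x ^ (n+1)))
      (fun u hu => pow_le_pow_left₀ (hnonneg u hu.1) (hψle u x hu.1 hu.2) _)
    simpa using this
  have hFcont : ∀ r > (0:ℝ), ContinuousOn F (Icc 0 r) := by
    intro r hr
    have := intervalIntegral.continuousOn_primitive_interval (μ := volume) (f := fun x => ψ x ^ (n+1)) (a := 0) (b := r)
      (by
        rw [uIcc_of_le hr.le]
        exact (hcontp.mono Icc_subset_Ici_self).integrableOn_Icc)
    rwa [uIcc_of_le hr.le] at this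
  have key : ∀ r > (0:ℝ), ψ r ^ (n+2) / (n+2) ≤ deriv ψ r * F r := by
    intro r hr
    have hG : MonotoneOn (fun x => deriv ψ r * F x - ψ x ^ (n+2) / (n+2)) (Icc 0 r) := by
      have hd : ∀ x ∈ interior (Icc 0 r), HasDerivAt (fun x => deriv ψ r * F x - ψ x ^ (n+2) / (n+2))
          (deriv ψ r * ψ x ^ (n+1) - ψ x ^ (n+1) * deriv ψ x) x := by
        intro x hx
        rw [interior_Icc] at hx
        have h := ((hFd x hx.1).const_mul (deriv ψ r)).sub
          ((((hdiff x hx.1).hasDerivAt).pow (n+2)).div_const ((n:ℝ)+2))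
        refine h.congr_deriv ?_
        have : (n:ℝ) + 2 ≠ 0 := by positivity
        rw [show n + 2 - 1 = n + 1 from rfl]
        push_cast
        field_simp
      apply monotoneOn_of_deriv_nonneg (convex_Icc 0 r)
      · exact (continuousOn_const.mul (hFcont r hr)).sub
          (((hcont.mono Icc_subset_Ici_self).pow _).div_const _)
      · exact fun x hx => (hd x hx).differentiableAt.differentiableWithinAt
      · intro x hx
        rw [(hd x hx).deriv]
        rw [interior_Icc] at hx
        have := mul_le_mul_of_nonneg_right (hdmono x hx.1 r hx.2.le)
          (pow_nonneg (hnonneg x hx.1.le) (n+1))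
        linarith
    have := hG (left_mem_Icc.2 hr.le) (right_mem_Icc.2 hr.le) hr.le
    simp [hψ0, hF] at this
    simpa [hF] using this
  have part1 : ∀ r > (0:ℝ), ψ r ^ (n+2) / 2 ≤ (((n+2:ℕ):ℝ) - 1) * deriv ψ r * F r := by
    intro r hr
    have h := key r hr
    have hp : 0 ≤ ψ r ^ (n+2) := pow_nonneg (hnonneg r hr.le) _
    have hn : (0:ℝ) ≤ n := Nat.cast_nonneg n
    rw [div_le_iff₀ (by positivity)] at h
    have h0 : 0 ≤ deriv ψ r * F r := by
      by_contra hc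
      push Not at hc
      nlinarith
    push_cast
    nlinarith [mul_nonneg hn h0]
  have hhcont : ∀ r > (0:ℝ), ContinuousAt (fun s => F s / ψ s ^ (n+1)) r := by
    intro r hr
    exact (hFd r hr).continuousAt.div ((hdiff r hr).continuousAt.pow _)
      (pow_pos (hψpos r hr) _).ne'
  have hhcOn : ContinuousOn (fun s => F s / ψ s ^ (n+1)) (Ioi 0) :=
    fun x hx => (hhcont x hx).continuousWithinAt
  have hhint : ∀ r > (0:ℝ), IntervalIntegrable (fun s => F s / ψ s ^ (n+1)) volume 0 r := by
    intro r hr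
    rw [intervalIntegrable_iff_integrableOn_Ioc_of_le hr.le]
    refine Integrable.mono' (g := fun _ => r) (integrableOn_const (by simp))
      ((hhcOn.mono Ioc_subset_Ioi_self).aestronglyMeasurable measurableSet_Ioc) ?_
    filter_upwards [ae_restrict_mem measurableSet_Ioc] with x hx
    have hp := pow_pos (hψpos x hx.1) (n+1)
    rw [Real.norm_of_nonneg (div_nonneg (hF0 x hx.1.le) hp.le), div_le_iff₀ hp]
    exact (hFle x hx.1.le).trans (mul_le_mul_of_nonneg_right hx.2 hp.le)
  have hHd : ∀ r > (0:ℝ), deriv (fun r => ∫ s in (0:ℝ)..r, F s / ψ s ^ (n+1)) r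
      = F r / ψ r ^ (n+1) := by
    intro r hr
    exact (intervalIntegral.integral_hasDerivAt_right (hhint r hr)
      (hhcOn.stronglyMeasurableAtFilter isOpen_Ioi r hr) (hhcont r hr)).deriv
  intro r hr
  have hp := hψpos r hr
  have part2 : (1:ℝ)/2 ≤ (((n+2:ℕ):ℝ) - 1) * (deriv ψ r / ψ r) * (F r / ψ r ^ (n+1)) := by
    have h := part1 r hr
    have : (((n+2:ℕ):ℝ) - 1) * (deriv ψ r / ψ r) * (F r / ψ r ^ (n+1))
      = ((((n+2:ℕ):ℝ) - 1) * deriv ψ r * F r) / ψ r ^ (n+2) := by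
      field_simp
      ring
    rw [this, le_div_iff₀ (by positivity)]
    linarith
  refine ⟨part1 r hr, ?_, ?_⟩
  · have h := hHd r hr
    change (1:ℝ)/2 ≤ _ * deriv (fun r => ∫ s in (0:ℝ)..r, F s / ψ s ^ (n+1)) r
    rw [h]
    exact part2
  · change deriv (deriv (fun r => ∫ s in (0:ℝ)..r, F s / ψ s ^ (n+1))) r ≤ _
    have he : deriv (fun r => ∫ s in (0:ℝ)..r, F s / ψ s ^ (n+1)) =ᶠ[nhds r]
        fun r => F r / ψ r ^ (n+1) := by
      filter_upwards [Ioi_mem_nhds hr] with x hx using hHd x hx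
    rw [he.deriv_eq]
    have hd := (hFd r hr).div ((hdiff r hr).hasDerivAt.pow (n+1)) (pow_pos hp (n+1)).ne'
    have hd' : deriv (fun r => F r / ψ r ^ (n+1)) r = _ := hd.deriv
    rw [hd']
    have : ∀ a b : ℝ, a = 1 - b → 1 / 2 ≤ b → a ≤ 1/2 := by intros; linarith
    refine this _ _ ?_ part2
    simp only [Pi.pow_apply, Nat.add_sub_cancel]
    push_cast
    field_simp
    ring
end

section
/- Let ψ: [2,∞) → ℝ be a C² function with ψ(r) ≥ 1, ψ'(r) > 0 and ψ''(r) ≥ 0 for all r ≥ 2. Set θ(r) := log ψ(r) and B(r) := (ψ(r)/ψ'(r))² log ψ(r). Let T > 0, K > 0, C₂ > 0 and λ > 0 satisfy 2T + K ≤ 1/C₂, and let a: [2,∞) × (0,T) → ℝ and μ: [2,∞) × (0,T) → ℝ be functions with 0 ≤ a(r,t) ≤ C₂ B(r) and μ(r,t) ≥ 0 for all (r,t). Then the function η(r,t) := λ exp(-K θ(r)/(2T - t)) satisfies ∂_t η(r,t) + a(r,t)·(∂²_r η(r,t) + μ(r,t) ∂_r η(r,t)) ≤ 0 for every (r,t)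 ∈ [2,∞) × (0,T). -/
open Real MeasureTheory Set Filter

/-- First derivative of the barrier in `r`, valid also where `ψ` fails to be differentiable. -/
lemma deriv_barrier (ψ : ℝ → ℝ) (p lam : ℝ) (hp : 0 < p) (hlam : 0 < lam) (s : ℝ)
    (hpos : ∀ᶠ x in nhds s, 0 < ψ x) :
    deriv (fun x => lam * Real.exp (-p * Real.log (ψ x))) s
      = lam * Real.exp (-p * Real.log (ψ s)) * (-p * (deriv ψ s / ψ s)) := by
  have h0 : 0 < ψ s := hpos.self_of_nhds
  by_cases hd : DifferentiableAt ℝ ψ s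
  · have h := (((hd.hasDerivAt.log h0.ne').const_mul (-p)).exp).const_mul lam
    rw [h.deriv]; ring
  · rw [deriv_zero_of_not_differentiableAt hd]
    rw [deriv_zero_of_not_differentiableAt]
    · simp
    · intro hg
      apply hd
      have h1 : DifferentiableAt ℝ (fun x => Real.exp (-(1/p) *
          Real.log (lam⁻¹ * (lam * Real.exp (-p * Real.log (ψ x)))))) s := by
        refine DifferentiableAt.exp (DifferentiableAt.const_mul (DifferentiableAt.log
          (hg.const_mul _) ?_) _)
        positivity
      refine h1.congr_of_eventuallyEq ?_
      filter_upwards [hpos] with x hx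
      rw [inv_mul_cancel_left₀ hlam.ne', Real.log_exp]
      have : -(1/p) * (-p * Real.log (ψ x)) = Real.log (ψ x) := by field_simp
      rw [this, Real.exp_log hx]

/-- The exponential barrier `η(r,t) = λ exp(-K log ψ(r)/(2T-t))` is a supersolution of the
backward dual equation `η_t + a (∂²_r η + μ ∂_r η) ≤ 0` on `[2,∞) × (0,T)`, provided
`ψ ≥ 1`, `ψ' > 0`, `ψ'' ≥ 0`, `μ ≥ 0`, `0 ≤ a ≤ C₂ B` with `B = (ψ/ψ')² log ψ`, and
`2T + K ≤ 1/C₂`. -/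
theorem statement11 (ψ : ℝ → ℝ)
    (hψC2 : ContDiffOn ℝ 2 ψ (Ici 2))
    (hψ1 : ∀ r ≥ (2:ℝ), 1 ≤ ψ r)
    (hψ' : ∀ r ≥ (2:ℝ), 0 < deriv ψ r)
    (hψ'' : ∀ r ≥ (2:ℝ), 0 ≤ deriv (deriv ψ) r)
    (T K C₂ lam : ℝ) (hT : 0 < T) (hK : 0 < K) (hC₂ : 0 < C₂) (hlam : 0 < lam)
    (hTK : 2*T + K ≤ 1/C₂)
    (a μ : ℝ → ℝ → ℝ)
    (ha : ∀ r ≥ (2:ℝ), ∀ t, 0 < t → t < T →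
      0 ≤ a r t ∧ a r t ≤ C₂ * ((ψ r / deriv ψ r)^2 * Real.log (ψ r)))
    (hμ : ∀ r ≥ (2:ℝ), ∀ t, 0 < t → t < T → 0 ≤ μ r t)
    (η : ℝ → ℝ → ℝ)
    (hη : ∀ r t, η r t = lam * Real.exp (-K * Real.log (ψ r) / (2*T - t))) :
    ∀ r ≥ (2:ℝ), ∀ t, 0 < t → t < T →
      deriv (fun τ => η r τ) t
          + a r t * (deriv (deriv (fun s => η s t)) r + μ r t * deriv (fun s => η s t) r)
        ≤ 0 := by
  intro r hr t ht0 htT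
  obtain ⟨ha0, ha1⟩ := ha r hr t ht0 htT
  have hm := hμ r hr t ht0 htT
  have hP := hψ' r hr
  have hQ := hψ'' r hr
  have h1 := hψ1 r hr
  have hd : DifferentiableAt ℝ ψ r := differentiableAt_of_deriv_ne_zero hP.ne'
  have h0 : 0 < ψ r := by linarith
  have hpos : ∀ᶠ x in nhds r, 0 < ψ x := hd.continuousAt.eventually (lt_mem_nhds h0)
  have hL : 0 ≤ Real.log (ψ r) := Real.log_nonneg h1
  have hD : 0 < 2 * T - t := by linarith
  obtain ⟨p, hp⟩ : ∃ p, p = K / (2 * T - t) := ⟨_, rfl⟩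
  have hp0 : 0 < p := by rw [hp]; positivity
  have hKp : K = p * (2 * T - t) := by rw [hp]; field_simp
  have hfun : (fun s => η s t) = fun x => lam * Real.exp (-p * Real.log (ψ x)) := by
    funext x
    rw [hη, hp]; congr 2; ring
  obtain ⟨G, hG⟩ : ∃ G, G = lam * Real.exp (-p * Real.log (ψ r)) := ⟨_, rfl⟩
  have hG0 : 0 < G := by rw [hG]; positivity
  obtain ⟨q, hq⟩ : ∃ q, q = deriv ψ r / ψ r := ⟨_, rfl⟩
  have hq0 : 0 < q := by rw [hq]; positivity
  -- time derivative
  have hEt : deriv (fun τ => η r τ) t = G * (-(p * Real.log (ψ r) / (2 * T - t))) := by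
    have e : (fun τ => η r τ)
        = fun τ => lam * Real.exp (-K * Real.log (ψ r) / (2*T - τ)) := by
      funext τ; exact hη r τ
    rw [e]
    have hb : HasDerivAt (fun τ : ℝ => 2 * T - τ) (-1) t := by
      simpa using (hasDerivAt_id t).const_sub (2 * T)
    have h := (((hasDerivAt_const t (-K * Real.log (ψ r))).fun_div hb hD.ne').exp).const_mul lam
    rw [h.deriv, hG]
    have e2 : -K * Real.log (ψ r) / (2*T - t) = -p * Real.log (ψ r) := by rw [hp]; ring
    rw [e2, hKp]
    field_simp
    ring
  have hE1 : deriv (fun s => η s t) r = G * (-p * q) := by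
    rw [hfun, deriv_barrier ψ p lam hp0 hlam r hpos, hG, hq]
  have hEv : deriv (fun s => η s t) =ᶠ[nhds r]
      fun s => lam * Real.exp (-p * Real.log (ψ s)) * (-p * (deriv ψ s / ψ s)) := by
    rw [hfun]
    filter_upwards [hpos.eventually_nhds] with s hs
    exact deriv_barrier ψ p lam hp0 hlam s hs
  -- second derivative bound
  have hE2 : deriv (deriv (fun s => η s t)) r ≤ G * ((p ^ 2 + p) * q ^ 2) := by
    rw [hEv.deriv_eq]
    by_cases hdd : DifferentiableAt ℝ (deriv ψ) r
    · have h := ((((hd.hasDerivAt.log h0.ne').const_mul (-p)).exp).const_mul lam).fun_mul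
        ((hdd.hasDerivAt.fun_div hd.hasDerivAt h0.ne').const_mul (-p))
      rw [h.deriv, ← hG]
      have e : lam * (Real.exp (-p * Real.log (ψ r)) * (-p * (deriv ψ r / ψ r)))
          * (-p * (deriv ψ r / ψ r)) + G * (-p * ((deriv (deriv ψ) r * ψ r
          - deriv ψ r * deriv ψ r) / ψ r ^ 2))
          = G * ((p ^ 2 + p) * q ^ 2) - G * p * (deriv (deriv ψ) r / ψ r) := by
        rw [hG, hq]; field_simp; ring
      rw [e]
      have : 0 ≤ G * p * (deriv (deriv ψ) r / ψ r) := by positivity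
      linarith
    · rw [deriv_zero_of_not_differentiableAt]
      · positivity
      · intro hg
        apply hdd
        have h2 : DifferentiableAt ℝ (fun s => (lam * Real.exp (-p * Real.log (ψ s))
            * (-p * (deriv ψ s / ψ s))) * (ψ s
            / (lam * Real.exp (-p * Real.log (ψ s)) * (-p)))) r := by
          refine hg.fun_mul (hd.fun_div ?_ ?_)
          · exact ((((hd.log h0.ne').const_mul (-p)).exp).const_mul lam).mul_const _
          · rw [← hG]; exact mul_ne_zero hG0.ne' (neg_ne_zero.mpr hp0.ne')
        refine h2.congr_of_eventuallyEq ?_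
        filter_upwards [hpos] with x hx
        have := (Real.exp_pos (-p * Real.log (ψ x))).ne'
        field_simp
  rw [hEt, hE1]
  have hA : a r t * q ^ 2 ≤ C₂ * Real.log (ψ r) := by
    calc a r t * q ^ 2 ≤ (C₂ * ((ψ r / deriv ψ r)^2 * Real.log (ψ r))) * q ^ 2 := by gcongr
      _ = C₂ * Real.log (ψ r) := by rw [hq]; field_simp
  have hC : C₂ * (p + 1) ≤ 1 / (2 * T - t) := by
    rw [le_div_iff₀ hD]
    have h3 : C₂ * (2 * T + K) ≤ 1 := by
      rw [le_div_iff₀ hC₂] at hTK; linarith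
    have h4 : C₂ * (p + 1) * (2 * T - t) = C₂ * (2 * T - t + K) := by rw [hKp]; ring
    rw [h4]
    nlinarith [mul_pos hC₂ ht0]
  have s1 : a r t * deriv (deriv (fun s => η s t)) r
      ≤ a r t * (G * ((p ^ 2 + p) * q ^ 2)) := by gcongr
  have s2 : a r t * (G * ((p ^ 2 + p) * q ^ 2))
      ≤ G * (p * Real.log (ψ r) / (2 * T - t)) := by
    calc a r t * (G * ((p ^ 2 + p) * q ^ 2)) = G * (p ^ 2 + p) * (a r t * q ^ 2) := by ring
      _ ≤ G * (p ^ 2 + p) * (C₂ * Real.log (ψ r)) := by gcongr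
      _ = G * p * Real.log (ψ r) * (C₂ * (p + 1)) := by ring
      _ ≤ G * p * Real.log (ψ r) * (1 / (2 * T - t)) := by gcongr
      _ = _ := by ring
  have s3 : 0 ≤ a r t * (μ r t * (G * (p * q))) := by positivity
  have s4 : a r t * (deriv (deriv (fun s => η s t)) r + μ r t * (G * (-p * q)))
      = a r t * deriv (deriv (fun s => η s t)) r - a r t * (μ r t * (G * (p * q))) := by ring
  rw [s4]
  linarith
end

section
/- For every C₀ > 0 there exist constants a, b, c > 0 such that the function ψ: [0,∞) → ℝ defined by ψ(r) = sinh(cr)/c for r ∈ [0,1) and ψ(r) = a·e^{C₀ r²/2} - b for r ≥ 1 is continuously differentiable on [0,∞), twice differentiable on [0,1) ∪ (1,∞), satisfies ψ(0) = 0, ψ'(0) = 1, ψ(r) > 0 for all r > 0, and ψ''(r)/ψ(r) ≥ C₀ (1 + C₀ r²) for all r ∈ (0,1) ∪ (1,∞). -/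
open Real MeasureTheory Set Filter

/-- For every `C₀ > 0` there are `a, b, c > 0` such that the function equal to
`sinh(cr)/c` on `[0,1)` and to `a e^{C₀ r²/2} - b` on `[1,∞)` is `C¹` on `[0,∞)`,
`C²` on `[0,1) ∪ (1,∞)`, satisfies `ψ(0)=0`, `ψ'(0)=1`, `ψ > 0` on `(0,∞)`, and
`ψ''/ψ ≥ C₀(1+C₀ r²)` on `(0,1) ∪ (1,∞)`; i.e. it is an admissible model function
with radial curvature at least quadratically negative. -/
theorem statement12 (C₀ : ℝ) (hC₀ : 0 < C₀) :
    ∃ a b c : ℝ, 0 < a ∧ 0 < b ∧ 0 < c ∧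
      ∀ ψ : ℝ → ℝ,
        (∀ r, ψ r = if r < 1 then Real.sinh (c*r)/c else a * Real.exp (C₀*r^2/2) - b) →
        ContDiffOn ℝ 1 ψ (Ici 0) ∧
        ContDiffOn ℝ 2 ψ (Ico 0 1) ∧
        ContDiffOn ℝ 2 ψ (Ioi 1) ∧
        ψ 0 = 0 ∧ deriv ψ 0 = 1 ∧ (∀ r > (0:ℝ), 0 < ψ r) ∧
        ∀ r : ℝ, ((0 < r ∧ r < 1) ∨ 1 < r) →
          C₀ * (1 + C₀ * r^2) ≤ deriv (deriv ψ) r / ψ r := by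
  obtain ⟨c, hc⟩ : ∃ c : ℝ, c = C₀ + 1 := ⟨_, rfl⟩
  have hc0 : 0 < c := by linarith
  obtain ⟨a, ha⟩ : ∃ a : ℝ, a = Real.cosh c * Real.exp (-(C₀/2)) / C₀ := ⟨_, rfl⟩
  obtain ⟨b, hb⟩ : ∃ b : ℝ, b = Real.cosh c / C₀ - Real.sinh c / c := ⟨_, rfl⟩
  have hcosh := Real.cosh_pos c
  have hsinh : 0 < Real.sinh c := Real.sinh_pos_iff.mpr hc0
  have ha0 : 0 < a := by rw [ha]; positivity
  have hb0 : 0 < b := by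
    rw [hb, sub_pos, div_lt_div_iff₀ hc0 hC₀]
    have h1 := Real.sinh_lt_cosh c
    nlinarith
  have hae : a * Real.exp (C₀/2) = Real.cosh c / C₀ := by
    rw [ha, div_mul_eq_mul_div, mul_assoc, ← Real.exp_add]
    simp
  have hmatch : a * Real.exp (C₀/2) - b = Real.sinh c / c := by
    rw [hae, hb]; ring
  refine ⟨a, b, c, ha0, hb0, hc0, ?_⟩
  intro ψ hψ
  have hL : ∀ r < 1, ψ r = Real.sinh (c*r)/c := fun r hr => by rw [hψ, if_pos hr]
  have hR : ∀ r, 1 ≤ r → ψ r = a * Real.exp (C₀*r^2/2) - b :=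
    fun r hr => by rw [hψ, if_neg (not_lt.mpr hr)]
  have hL' : ∀ r ≤ 1, ψ r = Real.sinh (c*r)/c := by
    intro r hr
    rcases hr.lt_or_eq with h | h
    · exact hL r h
    · subst h
      rw [hR 1 le_rfl, mul_one, ← hmatch]; norm_num
  have dL : ∀ r, HasDerivAt (fun r => Real.sinh (c*r)/c) (Real.cosh (c*r)) r := by
    intro r
    have h := (((hasDerivAt_id r).const_mul c).sinh).div_const c
    refine h.congr_deriv ?_
    simp only [id]
    field_simp
  have dE : ∀ r, HasDerivAt (fun r => Real.exp (C₀*r^2/2)) (C₀ * r * Real.exp (C₀*r^2/2)) r := by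
    intro r
    have h := ((((hasDerivAt_id r).pow 2).const_mul C₀).div_const 2).exp
    refine h.congr_deriv ?_
    simp
    ring
  have dR : ∀ r, HasDerivAt (fun r => a * Real.exp (C₀*r^2/2) - b)
      (a * (C₀ * r * Real.exp (C₀*r^2/2))) r := fun r => ((dE r).const_mul a).sub_const b
  have eL : ∀ r < 1, ψ =ᶠ[nhds r] fun r => Real.sinh (c*r)/c := fun r hr =>
    Filter.eventuallyEq_of_mem (Iio_mem_nhds hr) (fun x hx => hL x hx)
  have eR : ∀ r, 1 < r → ψ =ᶠ[nhds r] fun r => a * Real.exp (C₀*r^2/2) - b := fun r hr =>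
    Filter.eventuallyEq_of_mem (Ioi_mem_nhds hr) (fun x hx => hR x (le_of_lt hx))
  have hm' : a * (C₀ * 1 * Real.exp (C₀*1^2/2)) = Real.cosh (c*1) := by
    have : a * (C₀ * 1 * Real.exp (C₀*1^2/2)) = C₀ * (a * Real.exp (C₀/2)) := by
      norm_num; ring
    rw [this, hae, mul_one]; field_simp
  have hD : ∀ r, HasDerivAt ψ (if r ≤ 1 then Real.cosh (c*r)
      else a * (C₀ * r * Real.exp (C₀*r^2/2))) r := by
    intro r
    rcases lt_trichotomy r 1 with h | h | h
    · rw [if_pos h.le]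
      exact (dL r).congr_of_eventuallyEq (eL r h)
    · subst h
      rw [if_pos le_rfl]
      have h1 : HasDerivWithinAt ψ (Real.cosh (c*1)) (Iic 1) 1 :=
        (dL 1).hasDerivWithinAt.congr (fun x hx => hL' x hx) (hL' 1 le_rfl)
      have h2 : HasDerivWithinAt ψ (Real.cosh (c*1)) (Ici 1) 1 := by
        rw [← hm']
        exact (dR 1).hasDerivWithinAt.congr (fun x hx => hR x hx) (hR 1 le_rfl)
      have h3 := h1.union h2
      rwa [Iic_union_Ici, hasDerivWithinAt_univ] at h3
    · rw [if_neg (not_le.mpr h)]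
      exact (dR r).congr_of_eventuallyEq (eR r h)
  have hderiv : deriv ψ = fun r => if r ≤ 1 then Real.cosh (c*r)
      else a * (C₀ * r * Real.exp (C₀*r^2/2)) := funext fun r => (hD r).deriv
  have hC1 : ContDiff ℝ 1 ψ := by
    rw [contDiff_one_iff_deriv]
    refine ⟨fun r => (hD r).differentiableAt, ?_⟩
    rw [hderiv]
    refine Continuous.if_le (by fun_prop) (by fun_prop) continuous_id continuous_const ?_
    intro x hx
    have hx' : x = 1 := hx
    subst hx'
    exact hm'.symm
  have hpos : ∀ r > (0:ℝ), 0 < ψ r := by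
    intro r hr
    rcases lt_or_ge r 1 with h | h
    · rw [hL r h]
      exact div_pos (Real.sinh_pos_iff.mpr (mul_pos hc0 hr)) hc0
    · rw [hR r h]
      have h1 : Real.exp (C₀/2) ≤ Real.exp (C₀*r^2/2) := by
        apply Real.exp_le_exp.mpr
        nlinarith [mul_nonneg hC₀.le (show (0:ℝ) ≤ r^2 - 1 by nlinarith)]
      have h2 := mul_le_mul_of_nonneg_left h1 ha0.le
      have h3 : 0 < Real.sinh c / c := by positivity
      linarith
  refine ⟨hC1.contDiffOn, ?_, ?_, ?_, ?_, hpos, ?_⟩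
  · have h : ContDiff ℝ 2 (fun r : ℝ => Real.sinh (c*r)/c) :=
      (Real.contDiff_sinh.comp (contDiff_const.mul contDiff_id)).div_const c
    exact h.contDiffOn.congr fun x hx => hL x hx.2
  · have h : ContDiff ℝ 2 (fun r : ℝ => a * Real.exp (C₀*r^2/2) - b) := by fun_prop
    exact h.contDiffOn.congr fun x hx => hR x (le_of_lt hx)
  · rw [hL 0 one_pos]; simp
  · rw [hderiv]; simp
  · rintro r (⟨h0, h1⟩ | h1)
    · have e : deriv ψ =ᶠ[nhds r] fun r => Real.cosh (c*r) :=
        Filter.eventuallyEq_of_mem (Iio_mem_nhds h1) (fun x hx => by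
          rw [hderiv]; exact if_pos (le_of_lt hx))
      have d : HasDerivAt (fun r => Real.cosh (c*r)) (c * Real.sinh (c*r)) r := by
        refine (((hasDerivAt_id r).const_mul c).cosh).congr_deriv ?_
        simp only [id]
        ring
      have hs : 0 < ψ r := hpos r h0
      rw [le_div_iff₀ hs, e.deriv_eq, d.deriv]
      have h2 : c * Real.sinh (c*r) = c^2 * ψ r := by
        rw [hL r h1]; field_simp
      rw [h2]
      apply mul_le_mul_of_nonneg_right _ hs.le
      have : r^2 ≤ 1 := by nlinarith
      have h3 := mul_le_mul_of_nonneg_left this (mul_pos hC₀ hC₀).le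
      rw [hc]
      nlinarith
    · have e : deriv ψ =ᶠ[nhds r] fun r => a * (C₀ * r * Real.exp (C₀*r^2/2)) :=
        Filter.eventuallyEq_of_mem (Ioi_mem_nhds h1) (fun x hx => by
          rw [hderiv]; exact if_neg (not_le.mpr hx))
      have d : HasDerivAt (fun r => a * (C₀ * r * Real.exp (C₀*r^2/2)))
          (C₀ * (1 + C₀ * r^2) * (a * Real.exp (C₀*r^2/2))) r := by
        refine ((((hasDerivAt_id r).const_mul C₀).mul (dE r)).const_mul a).congr_deriv ?_
        simp only [id]
        ring
      rw [le_div_iff₀ (hpos r (by linarith)), e.deriv_eq, d.deriv, hR r h1.le]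
      apply mul_le_mul_of_nonneg_left _ (by positivity)
      linarith
end

section
/- Let C₀ > 0, K > 0 and κ > K/C₀. Then there exists R > 1 such that for every A > 0, B > 0 and every r > R, the function φ(r) := A·e^{C₀ r²/2} (log r)^{-κ} + B satisfies φ''(r)/φ(r) ≤ C₀ (1 + C₀ r²) - K/log r. More precisely, setting f(r) := e^{C₀ r²/2} (log r)^{-κ}, one has the identity f''(r)/f(r) = C₀(1 + C₀ r²) + (κ/(r² log r))(1 + (κ+1)/log r) - 2κ C₀/log r for all r > 1, and for r > R it holds φ''(r)/φ(r) ≤ f''(r)/f(r) ≤ C₀(1 + C₀ r²) - K/log r. -/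
open Real MeasureTheory Set Filter

theorem f_hasDeriv (C κ r : ℝ) (hr : 1 < r) :
    HasDerivAt (fun s => Real.exp (C*s^2/2) * (Real.log s) ^ (-κ))
      ((Real.exp (C*r^2/2) * (Real.log r) ^ (-κ)) * (C * r - κ / (r * Real.log r))) r := by
  have hL : 0 < Real.log r := Real.log_pos hr
  have hr0 : r ≠ 0 := by positivity
  have h1 : HasDerivAt (fun s : ℝ => C*s^2/2) (C*r) r := by
    have := ((hasDerivAt_pow 2 r).const_mul C).div_const 2
    refine this.congr_deriv ?_
    norm_num
    try ring
  have h2 := (Real.hasDerivAt_log hr0).rpow_const (p := -κ) (Or.inl hL.ne')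
  have h3 := h1.exp.mul h2
  refine h3.congr_deriv ?_
  rw [Real.rpow_sub_one hL.ne']
  field_simp
  ring

theorem f_deriv2 (C κ r : ℝ) (hr : 1 < r) :
    deriv (deriv (fun s => Real.exp (C*s^2/2) * (Real.log s) ^ (-κ))) r =
      (Real.exp (C*r^2/2) * (Real.log r) ^ (-κ)) *
      (C * (1 + C * r^2) + κ/(r^2 * Real.log r) * (1 + (κ+1)/Real.log r)
            - 2*κ*C/Real.log r) := by
  have hL : 0 < Real.log r := Real.log_pos hr
  have hr0 : r ≠ 0 := by positivity
  have he : deriv (fun s => Real.exp (C*s^2/2) * (Real.log s) ^ (-κ)) =ᶠ[nhds r]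
      fun s => (Real.exp (C*s^2/2) * (Real.log s) ^ (-κ)) * (C * s - κ / (s * Real.log s)) := by
    filter_upwards [lt_mem_nhds hr] with s hs
    exact (f_hasDeriv C κ s hs).deriv
  rw [he.deriv_eq]
  have h1 := (hasDerivAt_id r).mul (Real.hasDerivAt_log hr0)
  have h2 := (hasDerivAt_const r κ).div h1 (mul_ne_zero hr0 hL.ne')
  have h3 := ((hasDerivAt_id r).const_mul C).sub h2
  have h4 := (f_hasDeriv C κ r hr).mul h3
  refine (HasDerivAt.deriv (h4.congr_deriv ?_)).trans rfl
  simp only [id, Pi.mul_apply, Pi.sub_apply, Pi.div_apply]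
  generalize Real.exp (C*r^2/2) * (Real.log r) ^ (-κ) = F
  field_simp
  ring

/-- For `C₀, K > 0` and `κ > K/C₀`, setting `f(r) = e^{C₀ r²/2} (log r)^{-κ}`, one has the
identity `f''/f = C₀(1+C₀r²) + (κ/(r² log r))(1+(κ+1)/log r) - 2κC₀/log r` for `r > 1`,
and there is `R > 1` such that for all `A, B > 0` and `r > R`, the function
`φ = A f + B` satisfies `φ''/φ ≤ f''/f ≤ C₀(1+C₀r²) - K/log r`. -/
theorem statement13 (C₀ K κ : ℝ) (hC₀ : 0 < C₀) (hK : 0 < K) (hκ : K / C₀ < κ) :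
    (∀ r > (1:ℝ),
      deriv (deriv (fun s => Real.exp (C₀*s^2/2) * (Real.log s) ^ (-κ))) r
          / (Real.exp (C₀*r^2/2) * (Real.log r) ^ (-κ))
        = C₀ * (1 + C₀ * r^2) + κ/(r^2 * Real.log r) * (1 + (κ+1)/Real.log r)
            - 2*κ*C₀/Real.log r) ∧
    ∃ R : ℝ, 1 < R ∧ ∀ A > (0:ℝ), ∀ B > (0:ℝ), ∀ r > R,
      deriv (deriv (fun s => A * (Real.exp (C₀*s^2/2) * (Real.log s) ^ (-κ)) + B)) r
          / (A * (Real.exp (C₀*r^2/2) * (Real.log r) ^ (-κ)) + B)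
        ≤ deriv (deriv (fun s => Real.exp (C₀*s^2/2) * (Real.log s) ^ (-κ))) r
          / (Real.exp (C₀*r^2/2) * (Real.log r) ^ (-κ)) ∧
      deriv (deriv (fun s => Real.exp (C₀*s^2/2) * (Real.log s) ^ (-κ))) r
          / (Real.exp (C₀*r^2/2) * (Real.log r) ^ (-κ))
        ≤ C₀ * (1 + C₀*r^2) - K / Real.log r := by
  have hκ0 : 0 < κ := lt_trans (by positivity) hκ
  have hKκ : K < κ * C₀ := (div_lt_iff₀ hC₀).1 hκ
  have hf : ∀ r : ℝ, 1 < r → 0 < Real.exp (C₀*r^2/2) * (Real.log r) ^ (-κ) := fun r hr =>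
    mul_pos (Real.exp_pos _) (Real.rpow_pos_of_pos (Real.log_pos hr) _)
  have key : ∀ r > (1:ℝ),
      deriv (deriv (fun s => Real.exp (C₀*s^2/2) * (Real.log s) ^ (-κ))) r
          / (Real.exp (C₀*r^2/2) * (Real.log r) ^ (-κ))
        = C₀ * (1 + C₀ * r^2) + κ/(r^2 * Real.log r) * (1 + (κ+1)/Real.log r)
            - 2*κ*C₀/Real.log r := by
    intro r hr
    rw [f_deriv2 C₀ κ r hr, mul_div_cancel_left₀ _ (hf r hr).ne']
  refine ⟨key, Real.exp 1 + (2*κ+2)/C₀, ?_, ?_⟩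
  · have : (1:ℝ) < Real.exp 1 := by simp
    have : 0 < (2*κ+2)/C₀ := by positivity
    linarith
  intro A hA B hB r hr
  have he1 : (1:ℝ) < Real.exp 1 := by simp
  have hq : 0 < (2*κ+2)/C₀ := by positivity
  have hr1 : 1 < r := by linarith
  have hL : 1 < Real.log r := by
    rw [Real.lt_log_iff_exp_lt (by linarith)]
    linarith
  have hL0 : 0 < Real.log r := by linarith
  have hCr : 2*κ+2 < C₀ * r := by
    have : (2*κ+2)/C₀ < r := by linarith
    rw [div_lt_iff₀ hC₀] at this
    linarith
  have hCr2 : 2*κ+2 < C₀ * r^2 := by nlinarith [mul_pos hC₀ (by linarith : 0 < r)]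
  have hdiv : (κ+1)/Real.log r ≤ κ+1 := div_le_self (by linarith) hL.le
  constructor
  · have hd : deriv (fun s => A * (Real.exp (C₀*s^2/2) * (Real.log s) ^ (-κ)) + B) =
        fun s => A * deriv (fun s => Real.exp (C₀*s^2/2) * (Real.log s) ^ (-κ)) s := by
      funext s
      rw [deriv_add_const, deriv_const_mul_field]
    rw [hd, deriv_const_mul_field]
    have hpos : 0 ≤ deriv (deriv (fun s => Real.exp (C₀*s^2/2) * (Real.log s) ^ (-κ))) r := by
      rw [f_deriv2 C₀ κ r hr1]
      apply mul_nonneg (hf r hr1).le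
      have h1 : 2*κ*C₀/Real.log r ≤ 2*κ*C₀ := div_le_self (by positivity) hL.le
      have h2 : 0 ≤ κ/(r^2 * Real.log r) * (1 + (κ+1)/Real.log r) := by positivity
      nlinarith
    have hF := hf r hr1
    rw [div_le_div_iff₀ (by positivity) hF]
    nlinarith [mul_nonneg hpos hB.le]
  · rw [key r hr1]
    have h1 : κ/(r^2 * Real.log r) * (1 + (κ+1)/Real.log r) ≤ κ * C₀ / Real.log r := by
      have : κ/(r^2 * Real.log r) * (1 + (κ+1)/Real.log r)
          ≤ κ/(r^2 * Real.log r) * (C₀ * r^2) := by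
        apply mul_le_mul_of_nonneg_left _ (by positivity)
        linarith
      refine this.trans (le_of_eq ?_)
      field_simp
    have h2 : K / Real.log r ≤ κ * C₀ / Real.log r := by gcongr
    have h3 : 2*κ*C₀/Real.log r = 2 * (κ * C₀ / Real.log r) := by ring
    linarith
end

section
/- Let N ≥ 2 be an integer, let C₀, a, b > 0 with a·e^{C₀/2} > b, and let ψ be a model function such that ψ(r) = a·e^{C₀ r²/2} - b for all r ≥ 1. Let H be the associated function. Then there exist constants 0 < c₁ < c₂ and R ≥ 2 such that c₁ log r ≤ H(r) ≤ c₂ log r and c₁/r ≤ H'(r) ≤ c₂/r for all r ≥ R. -/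
open Real MeasureTheory Set Filter

lemma exists_cmp (R K : ℝ) (u v u' v' : ℝ → ℝ)
    (hu : ∀ r ≥ R, HasDerivAt u (u' r) r) (hv : ∀ r ≥ R, HasDerivAt v (v' r) r)
    (hle : ∀ r ≥ R, u' r ≤ K * v' r) (hv0 : ∀ r ≥ R, 0 ≤ v' r) (hvR : 0 < v R) :
    ∃ C > 0, ∀ r ≥ R, u r ≤ C * v r := by
  refine ⟨|K| + |u R| / v R + 1, by positivity, ?_⟩
  intro r hr
  set C := |K| + |u R| / v R + 1 with hC
  have hq : 0 ≤ |u R| / v R := by positivity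
  have hKC : K ≤ C := by have := le_abs_self K; linarith
  have hd : ∀ x ≥ R, HasDerivAt (fun x => C * v x - u x) (C * v' x - u' x) x :=
    fun x hx => ((hv x hx).const_mul C).sub (hu x hx)
  have hmono : MonotoneOn (fun x => C * v x - u x) (Ici R) := by
    apply monotoneOn_of_deriv_nonneg (convex_Ici R)
    · exact fun x hx => (hd x hx).continuousAt.continuousWithinAt
    · intro x hx
      rw [interior_Ici] at hx
      exact (hd x (le_of_lt hx)).differentiableAt.differentiableWithinAt
    · intro x hx
      rw [interior_Ici] at hx
      have hx' : x ≥ R := le_of_lt hx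
      rw [(hd x hx').deriv]
      have := hle x hx'
      have := mul_le_mul_of_nonneg_right hKC (hv0 x hx')
      linarith
  have h1 := hmono (mem_Ici.2 le_rfl) (mem_Ici.2 hr) hr
  have h2 : u R ≤ C * v R := by
    have : |u R| / v R * v R = |u R| := by field_simp
    have h3 : |u R| / v R * v R ≤ C * v R := by
      apply mul_le_mul_of_nonneg_right _ hvR.le
      have := abs_nonneg K
      linarith
    have := le_abs_self (u R)
    linarith
  simp only at h1
  linarith

lemma hasDerivAt_prim (f : ℝ → ℝ) (hf : ContinuousOn f (Ici 0)) (r : ℝ) (hr : 0 < r) :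
    HasDerivAt (fun x => ∫ t in (0:ℝ)..x, f t) (f r) r := by
  apply intervalIntegral.integral_hasDerivAt_right
  · apply ContinuousOn.intervalIntegrable
    apply hf.mono
    rw [uIcc_of_le hr.le]
    exact Icc_subset_Ici_self
  · exact ContinuousOn.stronglyMeasurableAtFilter isOpen_Ioi (hf.mono Ioi_subset_Ici_self) r hr
  · exact hf.continuousAt (Ici_mem_nhds hr)

lemma quot_cont (n : ℕ) (hn : 1 ≤ n) (ψ : ℝ → ℝ) (hc : ContinuousOn ψ (Ici 0))
    (hψ0 : ψ 0 = 0) (hψ'0 : deriv ψ 0 = 1) (hψpos : ∀ r > (0:ℝ), 0 < ψ r) :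
    ContinuousOn (fun s => (∫ t in (0:ℝ)..s, ψ t ^ n) / ψ s ^ n) (Ici 0) := by
  intro s hs
  rcases eq_or_lt_of_le (mem_Ici.1 hs) with h0 | hpos
  · subst h0
    have hdiff : HasDerivAt ψ 1 0 := by
      rw [← hψ'0]
      exact (differentiableAt_of_deriv_ne_zero (by rw [hψ'0]; norm_num)).hasDerivAt
    have hb := (hasDerivAt_iff_isLittleO.1 hdiff).def (c := 1/2) (by norm_num)
    obtain ⟨δ, hδ, hball⟩ := Metric.eventually_nhds_iff.1 hb
    have hbd : ∀ t, 0 ≤ t → t < δ → t / 2 ≤ ψ t ∧ ψ t ≤ 2 * t := by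
      intro t ht0 htδ
      have h := hball (y := t) (by rw [Real.dist_eq, sub_zero, abs_of_nonneg ht0]; exact htδ)
      simp only [hψ0, sub_zero, smul_eq_mul, mul_one, Real.norm_eq_abs, abs_of_nonneg ht0] at h
      rw [abs_le] at h
      constructor <;> linarith [h.1, h.2]
    have hval : (∫ t in (0:ℝ)..0, ψ t ^ n) / ψ 0 ^ n = 0 := by simp
    have key : ∀ t, 0 ≤ t → t < δ → 0 ≤ (∫ x in (0:ℝ)..t, ψ x ^ n) / ψ t ^ n ∧
        (∫ x in (0:ℝ)..t, ψ x ^ n) / ψ t ^ n ≤ 4 ^ n * t := by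
      intro t ht0 htδ
      rcases eq_or_lt_of_le ht0 with h | h
      · subst h; simp
      have hp := hψpos t h
      have hnn : 0 ≤ ∫ x in (0:ℝ)..t, ψ x ^ n := by
        apply intervalIntegral.integral_nonneg ht0
        intro x hx
        have := hbd x hx.1 (lt_of_le_of_lt hx.2 htδ)
        have : 0 ≤ ψ x := by linarith [hx.1]
        positivity
      refine ⟨by positivity, ?_⟩
      rw [div_le_iff₀ (by positivity)]
      have h1 : ∫ x in (0:ℝ)..t, ψ x ^ n ≤ ∫ x in (0:ℝ)..t, (2 * t) ^ n := by
        apply intervalIntegral.integral_mono_on ht0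
        · apply ContinuousOn.intervalIntegrable
          rw [uIcc_of_le ht0]
          exact (hc.mono Icc_subset_Ici_self).pow n
        · exact intervalIntegrable_const
        · intro x hx
          have := hbd x hx.1 (lt_of_le_of_lt hx.2 htδ)
          exact pow_le_pow_left₀ (by linarith [hx.1]) (by linarith [hx.2]) n
      rw [intervalIntegral.integral_const, smul_eq_mul, sub_zero] at h1
      have h2 : (2 * t) ^ n ≤ (4 * ψ t) ^ n :=
        pow_le_pow_left₀ (by linarith) (by linarith [(hbd t ht0 htδ).1]) n
      rw [mul_pow 4] at h2
      have := mul_le_mul_of_nonneg_left h2 ht0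
      linarith
    unfold ContinuousWithinAt
    beta_reduce
    rw [hval]
    have hev : ∀ᶠ t in nhdsWithin (0:ℝ) (Ici 0), 0 ≤ t ∧ t < δ := by
      filter_upwards [self_mem_nhdsWithin, mem_nhdsWithin_of_mem_nhds (Iio_mem_nhds hδ)] with t h1 h2
      exact ⟨h1, h2⟩
    refine tendsto_of_tendsto_of_tendsto_of_le_of_le' (g := fun _ => (0:ℝ))
      (h := fun t => 4 ^ n * t) tendsto_const_nhds ?_ ?_ ?_
    · have : Continuous (fun t : ℝ => (4:ℝ) ^ n * t) := by fun_prop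
      have h := (this.tendsto 0).mono_left (nhdsWithin_le_nhds (s := Ici 0))
      simpa using h
    · filter_upwards [hev] with t ht using (key t ht.1 ht.2).1
    · filter_upwards [hev] with t ht using (key t ht.1 ht.2).2
  · apply ContinuousAt.continuousWithinAt
    have h1 := (hasDerivAt_prim (fun t => ψ t ^ n) (hc.pow n) s hpos).continuousAt
    have h2 : ContinuousAt (fun t => ψ t ^ n) s := (hc.pow n).continuousAt (Ici_mem_nhds hpos)
    exact h1.div h2 (pow_ne_zero _ (hψpos s hpos).ne')

/-- If `ψ` is a model function with `ψ(r) = a e^{C₀ r²/2} - b` for `r ≥ 1` (where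
`a e^{C₀/2} > b > 0`), then the associated function `H` satisfies
`c₁ log r ≤ H(r) ≤ c₂ log r` and `c₁/r ≤ H'(r) ≤ c₂/r` for `r ≥ R`, for suitable
constants `0 < c₁ < c₂` and `R ≥ 2`. -/
theorem statement15 (N : ℕ) (hN : 2 ≤ N) (C₀ a b : ℝ)
    (hC₀ : 0 < C₀) (ha : 0 < a) (hb : 0 < b) (hab : b < a * Real.exp (C₀/2))
    (ψ : ℝ → ℝ)
    (hsmooth : ContDiffOn ℝ (⊤ : ℕ∞) ψ (Ici 0))
    (hψ0 : ψ 0 = 0) (hψ'0 : deriv ψ 0 = 1)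
    (hψpos : ∀ r > (0:ℝ), 0 < ψ r)
    (hψeq : ∀ r ≥ (1:ℝ), ψ r = a * Real.exp (C₀ * r^2/2) - b) :
    ∃ c₁ c₂ R : ℝ, 0 < c₁ ∧ c₁ < c₂ ∧ 2 ≤ R ∧
      ∀ r ≥ R,
        c₁ * Real.log r ≤ Hfun N ψ r ∧ Hfun N ψ r ≤ c₂ * Real.log r ∧
        c₁ / r ≤ deriv (Hfun N ψ) r ∧ deriv (Hfun N ψ) r ≤ c₂ / r := by
  have hc : ContinuousOn ψ (Ici 0) := hsmooth.continuousOn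
  obtain ⟨n, hn⟩ : ∃ n, n = N - 1 := ⟨_, rfl⟩
  have hn1 : 1 ≤ n := by omega
  have hn1' : (1:ℝ) ≤ n := by exact_mod_cast hn1
  set F : ℝ → ℝ := fun s => ∫ t in (0:ℝ)..s, ψ t ^ n with hF
  set g : ℝ → ℝ := fun s => F s / ψ s ^ n with hg
  have hgc : ContinuousOn g (Ici 0) := quot_cont n hn1 ψ hc hψ0 hψ'0 hψpos
  have hH : Hfun N ψ = fun r => ∫ s in (0:ℝ)..r, g s := by
    funext r; simp only [Hfun, hg, hF, hn]
  have hFd : ∀ r > 0, HasDerivAt F (ψ r ^ n) r :=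
    fun r hr => hasDerivAt_prim (fun t => ψ t ^ n) (hc.pow n) r hr
  have hHd : ∀ r > 0, HasDerivAt (Hfun N ψ) (g r) r := by
    rw [hH]; exact fun r hr => hasDerivAt_prim g hgc r hr
  have hFpos : ∀ r > 0, 0 < F r := by
    intro r hr
    apply intervalIntegral.intervalIntegral_pos_of_pos_on
    · apply ContinuousOn.intervalIntegrable
      rw [uIcc_of_le (le_of_lt hr)]
      exact (hc.mono Icc_subset_Ici_self).pow n
    · exact fun x hx => pow_pos (hψpos x hx.1) n
    · exact hr
  have hgpos : ∀ r > 0, 0 < g r := fun r hr => div_pos (hFpos r hr) (pow_pos (hψpos r hr) n)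
  have hHpos : ∀ r > 0, 0 < Hfun N ψ r := by
    intro r hr
    rw [hH]
    apply intervalIntegral.intervalIntegral_pos_of_pos_on
    · apply ContinuousOn.intervalIntegrable
      rw [uIcc_of_le (le_of_lt hr)]
      exact hgc.mono Icc_subset_Ici_self
    · exact fun x hx => hgpos x hx.1
    · exact hr
  set R : ℝ := 2 + 2 / C₀ with hR
  have hR2 : 2 ≤ R := by have : 0 < 2 / C₀ := by positivity
                         linarith
  have hψd : ∀ r > 1, HasDerivAt ψ (C₀ * r * (ψ r + b)) r := by
    intro r hr
    have h1 : HasDerivAt (fun r : ℝ => a * Real.exp (C₀ * r^2/2) - b)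
        (C₀ * r * (ψ r + b)) r := by
      have h := ((((hasDerivAt_pow 2 r).const_mul C₀).div_const 2).exp.const_mul a).sub_const b
      refine h.congr_deriv ?_
      rw [hψeq r (le_of_lt hr)]
      push_cast
      ring
    apply h1.congr_of_eventuallyEq
    filter_upwards [Ioi_mem_nhds hr] with x hx using hψeq x (le_of_lt hx)
  set G' : ℝ → ℝ := fun r => (n * C₀ * (ψ r + b) * ψ r ^ (n-1)) - ψ r ^ n / r ^ 2 with hG'
  set G : ℝ → ℝ := fun r => ψ r ^ n / r with hG
  have hGd : ∀ r ≥ R, HasDerivAt G (G' r) r := by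
    intro r hr
    have hr0 : r ≠ 0 := by linarith
    have h := ((hψd r (by linarith)).pow n).div (hasDerivAt_id r) hr0
    refine h.congr_deriv ?_
    simp only [hG', id, Pi.pow_apply]
    field_simp
  have hpw : ∀ r, ψ r ^ n = ψ r * ψ r ^ (n-1) := by
    intro r
    rw [← pow_succ', Nat.sub_add_cancel hn1]
  have hG'lo : ∀ r ≥ R, n * C₀ / 2 * ψ r ^ n ≤ G' r := by
    intro r hr
    have hr0 : 0 < r := by linarith
    have hp := hψpos r hr0
    have hi : 1 / r ^ 2 ≤ n * C₀ / 2 := by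
      have h1 : 2 / C₀ ≤ r := by linarith
      rw [div_le_iff₀ hC₀] at h1
      have h2 : C₀ ≤ n * C₀ := by nlinarith
      rw [div_le_iff₀ (by positivity)]
      have h3 : 2 ≤ r * (r * C₀) := by nlinarith
      have h4 : r ^ 2 * C₀ ≤ r ^ 2 * (n * C₀) := mul_le_mul_of_nonneg_left h2 (by positivity)
      nlinarith
    have h5 := mul_le_mul_of_nonneg_right hi (pow_pos hp n).le
    have h6 : n * C₀ * ψ r ^ n ≤ n * C₀ * (ψ r + b) * ψ r ^ (n-1) := by
      rw [hpw]
      have : 0 ≤ n * C₀ * b * ψ r ^ (n-1) := by positivity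
      nlinarith
    have h7 : ψ r ^ n / r ^ 2 = 1 / r ^ 2 * ψ r ^ n := by ring
    simp only [hG']
    rw [h7]
    linarith
  have hψ1 : ∀ r ≥ R, ψ 1 ≤ ψ r := by
    intro r hr
    rw [hψeq 1 le_rfl, hψeq r (by linarith)]
    have : C₀ * 1 ^ 2 / 2 ≤ C₀ * r ^ 2 / 2 := by
      have : (1:ℝ) ^ 2 ≤ r ^ 2 := pow_le_pow_left₀ (by norm_num) (by linarith) 2
      have := mul_le_mul_of_nonneg_left this hC₀.le
      linarith
    have := mul_le_mul_of_nonneg_left (Real.exp_le_exp.2 this) ha.le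
    linarith
  have hψ1p := hψpos 1 one_pos
  have hG'hi : ∀ r ≥ R, G' r ≤ n * C₀ * (1 + b / ψ 1) * ψ r ^ n := by
    intro r hr
    have hr0 : 0 < r := by linarith
    have hp := hψpos r hr0
    have h1 : b ≤ b / ψ 1 * ψ r := by
      rw [div_mul_eq_mul_div, le_div_iff₀ hψ1p]
      exact mul_le_mul_of_nonneg_left (hψ1 r hr) hb.le
    have h2 : 0 ≤ ψ r ^ n / r ^ 2 := by positivity
    have h3 : n * C₀ * ψ r ^ (n-1) * (ψ r + b) ≤ n * C₀ * ψ r ^ (n-1) * (ψ r + b / ψ 1 * ψ r) :=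
      mul_le_mul_of_nonneg_left (by linarith) (by positivity)
    simp only [hG']
    rw [hpw] at h2 ⊢
    linarith
  have hRp : 0 < R := by linarith
  obtain ⟨C1, hC1, hFG⟩ := exists_cmp R (2 / (n * C₀)) F G (fun r => ψ r ^ n) G'
    (fun r hr => hFd r (by linarith)) hGd
    (fun r hr => by
      have := hG'lo r hr
      have hnC : 0 < n * C₀ := by positivity
      rw [div_mul_eq_mul_div, le_div_iff₀ hnC]
      linarith)
    (fun r hr => by
      have := hG'lo r hr
      have := hψpos r (by linarith)
      refine le_trans ?_ (hG'lo r hr)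
      positivity)
    (div_pos (pow_pos (hψpos R hRp) n) hRp)
  obtain ⟨C2, hC2, hGF⟩ := exists_cmp R (n * C₀ * (1 + b / ψ 1)) G F G' (fun r => ψ r ^ n)
    hGd (fun r hr => hFd r (by linarith)) hG'hi
    (fun r hr => (pow_pos (hψpos r (by linarith)) n).le) (hFpos R hRp)
  have hgup : ∀ r ≥ R, g r ≤ C1 * r⁻¹ := by
    intro r hr
    have hp := pow_pos (hψpos r (by linarith)) n
    have h := hFG r hr
    simp only [hg]
    rw [div_le_iff₀ hp]
    calc F r ≤ C1 * G r := h
      _ = _ := by simp only [hG]; ring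
  have hglo : ∀ r ≥ R, r⁻¹ ≤ C2 * g r := by
    intro r hr
    have hp := pow_pos (hψpos r (by linarith)) n
    have h := hGF r hr
    simp only [hg]
    rw [← mul_div_assoc, le_div_iff₀ hp]
    calc r⁻¹ * ψ r ^ n = G r := by simp only [hG]; ring
      _ ≤ _ := h
  obtain ⟨C3, hC3, hHl⟩ := exists_cmp R C1 (Hfun N ψ) Real.log g (fun r => r⁻¹)
    (fun r hr => hHd r (by linarith)) (fun r hr => Real.hasDerivAt_log (by linarith)) hgup
    (fun r hr => inv_nonneg.2 (by linarith)) (Real.log_pos (by linarith))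
  obtain ⟨C4, hC4, hlH⟩ := exists_cmp R C2 Real.log (Hfun N ψ) (fun r => r⁻¹) g
    (fun r hr => Real.hasDerivAt_log (by linarith)) (fun r hr => hHd r (by linarith)) hglo
    (fun r hr => (hgpos r (by linarith)).le) (hHpos R hRp)
  have hc1 : 0 < 1 / (C2 + C4) := by positivity
  refine ⟨1 / (C2 + C4), C1 + C3 + 1 / (C2 + C4), R, hc1, by linarith, hR2, ?_⟩
  intro r hr
  have hr0 : 0 < r := by linarith
  have hlog : 0 < Real.log r := Real.log_pos (by linarith)
  have hri : 0 < r⁻¹ := inv_pos.2 hr0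
  have hgr := hgpos r hr0
  have hHr := hHpos r hr0
  rw [(hHd r hr0).deriv, div_eq_mul_inv _ r, div_eq_mul_inv _ r, one_div_mul_eq_div,
    one_div_mul_eq_div, div_le_iff₀ (by positivity), div_le_iff₀ (by positivity)]
  have e1 := hHl r hr
  have e2 := hlH r hr
  have e3 := hgup r hr
  have e4 := hglo r hr
  have := mul_pos hC2 hHr
  have := mul_pos hC4 hgr
  have := mul_pos hC1 hlog
  have := mul_pos hC3 hri
  have := mul_pos hc1 hlog
  have := mul_pos hc1 hri
  refine ⟨?_, ?_, ?_, ?_⟩ <;> linarith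
end
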